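/- arXiv:1605.06775 — 3 statements merged into one kernel-verified Lean document; each statement's English description precedes it below -/
import Mathlib

section
/- Let α ∈ (0,1), T > 0, b > 0, let s : [0,T] → ℝ be absolutely continuous with s(0) = b, ṡ ≥ 0, and t ↦ t^{1−α} ṡ(t) continuous on [0,T], and let m ∈ ℕ. If v ∈ C([0,T]; ℝ^{m+1}), then the function g₁(τ) = ∫₀^τ (τ−p)^{−α} D̃(p,τ) v(p) dp has an absolutely continuous representative: there exists g̃₁ ∈ AC([0,T]; ℝ^{m+1}) with g̃₁(0) = 0 and g₁ = g̃₁ almost everywhere on [0,T]. -/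
open MeasureTheory Set Filter
open scoped Topology

/-- Eigenvalues `λ_n(t) = (π / s(t)) (n + 1/2)`. -/
noncomputable def lam (s : ℝ → ℝ) (n : ℕ) (t : ℝ) : ℝ :=
  Real.pi / s t * (n + 1 / 2)

/-- Eigenfunctions `φ_n(x,t) = √(2/s(t)) cos(λ_n(t) x)`. -/
noncomputable def phi (s : ℝ → ℝ) (n : ℕ) (x t : ℝ) : ℝ :=
  Real.sqrt (2 / s t) * Real.cos (lam s n t * x)

/-- `D̃(τ,t)_{n,k} = ∫₀^{s(τ)} ∂_τ φ_n(x,τ)[φ_k(x,t) − φ_k(x,τ)] dx`. -/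
noncomputable def Dtil (s : ℝ → ℝ) (m : ℕ) (τ t : ℝ) :
    Matrix (Fin (m + 1)) (Fin (m + 1)) ℝ :=
  Matrix.of fun n k : Fin (m + 1) =>
    ∫ x in (0:ℝ)..(s τ), deriv (fun r => phi s n x r) τ * (phi s k x t - phi s k x τ)

lemma kernel_bound {α p r : ℝ} (h0 : 0 < α) (h1 : α < 1) (hp : 0 < p) (hr : p < r) :
    p ^ (α - 1) * (r - p) ^ (-α) * r ^ (α - 1) ≤ p ^ (α ^ 2 - 1) * (r - p) ^ (α * (1 - α) - 1) := by
  have hrp : 0 < r - p := by linarith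
  have hr0 : 0 < r := by linarith
  have e1 : r ^ (α - 1) = r ^ (-(α * (1 - α))) * r ^ (-(1 - α) ^ 2) := by
    rw [← Real.rpow_add hr0]; congr 1; ring
  have b1 : r ^ (-(α * (1 - α))) ≤ p ^ (-(α * (1 - α))) :=
    Real.rpow_le_rpow_of_nonpos hp hr.le (by nlinarith)
  have b2 : r ^ (-(1 - α) ^ 2) ≤ (r - p) ^ (-(1 - α) ^ 2) :=
    Real.rpow_le_rpow_of_nonpos hrp (by linarith) (by nlinarith [sq_nonneg (1 - α)])
  have e2 : p ^ (α ^ 2 - 1) = p ^ (α - 1) * p ^ (-(α * (1 - α))) := by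
    rw [← Real.rpow_add hp]; congr 1; ring
  have e3 : (r - p) ^ (α * (1 - α) - 1) = (r - p) ^ (-α) * (r - p) ^ (-(1 - α) ^ 2) := by
    rw [← Real.rpow_add hrp]; congr 1; ring
  rw [e1, e2, e3]
  calc p ^ (α - 1) * (r - p) ^ (-α) * (r ^ (-(α * (1 - α))) * r ^ (-(1 - α) ^ 2))
      ≤ p ^ (α - 1) * (r - p) ^ (-α) * (p ^ (-(α * (1 - α))) * (r - p) ^ (-(1 - α) ^ 2)) := by
        gcongr
    _ = _ := by ring

lemma maj_integrable {T β γ : ℝ} (hT : 0 < T) (hβ : 0 < β) (hγ : 0 < γ) :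
    Integrable (fun z : ℝ × ℝ => (Ioo 0 T).indicator (fun x : ℝ => x ^ (β - 1)) z.2 *
      (Ioo 0 T).indicator (fun x : ℝ => x ^ (γ - 1)) (z.1 - z.2)) := by
  have h : ∀ β : ℝ, 0 < β → Integrable ((Ioo 0 T).indicator (fun x : ℝ => x ^ (β - 1))) := by
    intro β hβ
    rw [integrable_indicator_iff measurableSet_Ioo, intervalIntegral.integrableOn_Ioo_rpow_iff hT]
    linarith
  exact (h β hβ).convolution_integrand (ContinuousLinearMap.mul ℝ ℝ) (h γ hγ)

def Wset (T : ℝ) : Set (ℝ × ℝ) := {z | 0 < z.2 ∧ z.2 < z.1 ∧ z.1 < T}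

lemma Wset_open (T : ℝ) : IsOpen (Wset T) := by
  refine (isOpen_lt continuous_const continuous_snd).inter
    ((isOpen_lt continuous_snd continuous_fst).inter (isOpen_lt continuous_fst continuous_const))

lemma fub {T : ℝ} (Q G : ℝ → ℝ → ℝ)
    (hQ : Integrable ((Wset T).indicator (fun z => Q z.1 z.2)))
    (hG : ∀ p τ, 0 < p → p < τ → τ < T → ∫ r in p..τ, Q r p = G τ p) :
    ∃ d : ℝ → ℝ, IntegrableOn d (Icc 0 T) ∧ ∀ τ ∈ Ioo 0 T, IntegrableOn (G τ) (Ioo 0 τ) ∧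
      ∫ p in (0:ℝ)..τ, G τ p = ∫ r in (0:ℝ)..τ, d r := by
  refine ⟨fun r => ∫ p, (Wset T).indicator (fun z => Q z.1 z.2) (r, p), ?_, ?_⟩
  · exact hQ.integral_prod_left.integrableOn
  rintro τ ⟨h0, hT⟩
  have hQ' : Integrable ((Wset T).indicator (fun z => Q z.1 z.2))
      ((volume.restrict (Ioc 0 τ)).prod volume) := by
    have : (volume.restrict (Ioc 0 τ)).prod (volume : Measure ℝ)
        = ((volume : Measure ℝ).prod volume).restrict (Ioc 0 τ ×ˢ univ) := by
      rw [← Measure.prod_restrict, Measure.restrict_univ]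
    rw [this]
    exact hQ.integrableOn
  have key : (fun p => ∫ r in Ioc 0 τ, (Wset T).indicator (fun z => Q z.1 z.2) (r, p))
      = (Ioo 0 τ).indicator (G τ) := by
    funext p
    by_cases hp : p ∈ Ioo 0 τ
    · rw [indicator_of_mem hp, ← hG p τ hp.1 hp.2 hT, intervalIntegral.integral_of_le hp.2.le]
      have : ∀ r ∈ Ioc 0 τ, (Wset T).indicator (fun z => Q z.1 z.2) (r, p)
          = (Ioc p τ).indicator (fun r => Q r p) r := by
        intro r hr
        by_cases hpr : p < r
        · rw [indicator_of_mem, indicator_of_mem]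
          · exact ⟨hpr, hr.2⟩
          · exact ⟨hp.1, hpr, hr.2.trans_lt hT⟩
        · rw [indicator_of_notMem, indicator_of_notMem]
          · exact fun h => hpr h.1
          · exact fun h => hpr h.2.1
      rw [setIntegral_congr_fun measurableSet_Ioc this, setIntegral_indicator measurableSet_Ioc]
      congr 2
      ext r; constructor
      · exact fun h => h.2
      · exact fun h => ⟨⟨hp.1.trans h.1, h.2⟩, h⟩
    · rw [indicator_of_notMem hp]
      apply setIntegral_eq_zero_of_forall_eq_zero
      intro r hr
      apply indicator_of_notMem
      exact fun h => hp ⟨h.1, h.2.1.trans_le hr.2⟩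
  have hi := hQ'.integral_prod_right
  rw [key, integrable_indicator_iff measurableSet_Ioo] at hi
  refine ⟨hi, ?_⟩
  rw [intervalIntegral.integral_of_le h0.le, intervalIntegral.integral_of_le h0.le,
    integral_integral_swap (f := fun r p => (Wset T).indicator (fun z => Q z.1 z.2) (r, p)) hQ',
    key, integral_indicator measurableSet_Ioo, integral_Ioc_eq_integral_Ioo]

lemma keyl {α T C : ℝ} (h0 : 0 < α) (h1 : α < 1) (hT : 0 < T) (hC : 0 ≤ C)
    (s s' : ℝ → ℝ) (hs : Continuous s) (hs'c : ContinuousOn s' (Ioo 0 T))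
    (hsd : ∀ t ∈ Ioo 0 T, HasDerivAt s (s' t) t)
    (hb1 : ∀ t ∈ Ioo 0 T, |s' t| ≤ C * t ^ (α - 1))
    (hb2 : ∀ p τ, 0 < p → p < τ → τ < T → |s τ - s p| ≤ C * τ ^ (α - 1) * (τ - p))
    (N : ℝ → ℝ → ℝ) (hN : Continuous (Function.uncurry N)) :
    ∃ d : ℝ → ℝ, IntegrableOn d (Icc 0 T) ∧ ∀ τ ∈ Ioo 0 T,
      IntegrableOn (fun p => (τ - p) ^ (-α) * (s' p * ∫ y in (s p)..(s τ), N p y)) (Ioo 0 τ) ∧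
      ∫ p in (0:ℝ)..τ, (τ - p) ^ (-α) * (s' p * ∫ y in (s p)..(s τ), N p y)
        = ∫ r in (0:ℝ)..τ, d r := by
  obtain ⟨L, hL⟩ : ∃ L, ∀ z ∈ Icc (0:ℝ) T ×ˢ Icc (0:ℝ) T, ‖N z.1 (s z.2)‖ ≤ L := by
    apply IsCompact.exists_bound_of_continuousOn (isCompact_Icc.prod isCompact_Icc)
    exact (hN.comp (continuous_fst.prodMk (hs.comp continuous_snd))).continuousOn
  have hL0 : 0 ≤ L := (norm_nonneg _).trans (hL (0, 0) ⟨⟨le_rfl, hT.le⟩, ⟨le_rfl, hT.le⟩⟩)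
  have hH : ∀ p r, 0 < p → p < r → r < T →
      |∫ y in (s p)..(s r), N p y| ≤ L * (C * r ^ (α - 1) * (r - p)) := by
    intro p r hp hpr hr
    have := intervalIntegral.norm_integral_le_of_norm_le_const (a := s p) (b := s r)
      (f := fun y => N p y) (C := L) (by
        intro y hy
        obtain ⟨q, hq, rfl⟩ := intermediate_value_uIcc (hs.continuousOn (s := uIcc p r))
          (uIoc_subset_uIcc hy)
        rw [uIcc_of_le hpr.le] at hq
        exact hL (p, q) ⟨⟨hp.le, (hpr.trans hr).le⟩, ⟨hp.le.trans hq.1, hq.2.trans hr.le⟩⟩)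
    exact this.trans (by gcongr; exact hb2 p r hp hpr hr)
  have hHc : Continuous (fun z : ℝ × ℝ => ∫ y in (s z.2)..(s z.1), N z.2 y) := by
    have hJ : Continuous (fun z : ℝ × ℝ => ∫ y in (0:ℝ)..z.2, N z.1 y) :=
      intervalIntegral.continuous_parametric_intervalIntegral_of_continuous
        (f := fun (z : ℝ × ℝ) y => N z.1 y)
        (hN.comp ((continuous_fst.comp continuous_fst).prodMk continuous_snd)) continuous_snd
    have hc : ∀ p, Continuous (N p) := fun p => hN.comp (continuous_const.prodMk continuous_id)
    have : (fun z : ℝ × ℝ => ∫ y in (s z.2)..(s z.1), N z.2 y) = fun z =>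
        (∫ y in (0:ℝ)..(s z.1), N z.2 y) - ∫ y in (0:ℝ)..(s z.2), N z.2 y := by
      funext z
      rw [intervalIntegral.integral_interval_sub_left] <;> exact (hc _).intervalIntegrable _ _
    rw [this]
    exact (hJ.comp (continuous_snd.prodMk (hs.comp continuous_fst))).sub
      (hJ.comp (continuous_snd.prodMk (hs.comp continuous_snd)))
  set Q : ℝ → ℝ → ℝ := fun r p => (-α * (r - p) ^ (-α - 1)) * (s' p * ∫ y in (s p)..(s r), N p y)
    + (r - p) ^ (-α) * (s' p * (N p (s r) * s' r)) with hQdef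
  have hQb : ∀ p r, 0 < p → p < r → r < T →
      |Q r p| ≤ (2 * L * C * C) * (p ^ (α - 1) * (r - p) ^ (-α) * r ^ (α - 1)) := by
    intro p r hp hpr hr
    have hrp : 0 < r - p := by linarith
    have hr0 : 0 < r := by linarith
    have e : (r - p) ^ (-α - 1) * (r - p) = (r - p) ^ (-α) := by
      rw [← Real.rpow_add_one hrp.ne']; congr 1; ring
    have B1 : |(-α * (r - p) ^ (-α - 1)) * (s' p * ∫ y in (s p)..(s r), N p y)| ≤
        (1 * (r - p) ^ (-α - 1)) * ((C * p ^ (α - 1)) * (L * (C * r ^ (α - 1) * (r - p)))) := by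
      rw [abs_mul, abs_mul, abs_mul, abs_neg, abs_of_pos h0,
        abs_of_pos (Real.rpow_pos_of_pos hrp _)]
      gcongr
      · exact hb1 p ⟨hp, hpr.trans hr⟩
      · exact hH p r hp hpr hr
    have B2 : |(r - p) ^ (-α) * (s' p * (N p (s r) * s' r))| ≤
        (r - p) ^ (-α) * ((C * p ^ (α - 1)) * (L * (C * r ^ (α - 1)))) := by
      rw [abs_mul, abs_mul, abs_mul, abs_of_pos (Real.rpow_pos_of_pos hrp _)]
      gcongr
      · exact hb1 p ⟨hp, hpr.trans hr⟩
      · exact hL (p, r) ⟨⟨hp.le, (hpr.trans hr).le⟩, ⟨hr0.le, hr.le⟩⟩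
      · exact hb1 r ⟨hr0, hr⟩
    refine (abs_add_le _ _).trans ((add_le_add B1 B2).trans (le_of_eq ?_))
    rw [← e]; ring
  have hQc : ContinuousOn (fun z : ℝ × ℝ => Q z.1 z.2) (Wset T) := by
    have c1 : ContinuousOn (fun z : ℝ × ℝ => s' z.2) (Wset T) :=
      hs'c.comp continuous_snd.continuousOn (fun z hz => ⟨hz.1, hz.2.1.trans hz.2.2⟩)
    have c2 : ContinuousOn (fun z : ℝ × ℝ => s' z.1) (Wset T) :=
      hs'c.comp continuous_fst.continuousOn (fun z hz => ⟨hz.1.trans hz.2.1, hz.2.2⟩)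
    have c3 : ∀ q : ℝ, ContinuousOn (fun z : ℝ × ℝ => (z.1 - z.2) ^ q) (Wset T) := fun q =>
      (continuous_fst.sub continuous_snd).continuousOn.rpow_const
        (fun z hz => Or.inl (sub_pos.2 hz.2.1).ne')
    have c4 : ContinuousOn (fun z : ℝ × ℝ => N z.2 (s z.1)) (Wset T) :=
      (hN.comp (continuous_snd.prodMk (hs.comp continuous_fst))).continuousOn
    exact ((continuousOn_const.mul (c3 _)).mul (c1.mul hHc.continuousOn)).add
      ((c3 _).mul (c1.mul (c4.mul c2)))
  apply fub Q
  · have hm := (maj_integrable (T := T) (β := α ^ 2) (γ := α * (1 - α)) hT (by positivity)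
      (mul_pos h0 (by linarith))).const_mul (2 * L * C * C)
    refine hm.mono' ?_ ?_
    · rw [aestronglyMeasurable_indicator_iff (Wset_open T).measurableSet]
      exact hQc.aestronglyMeasurable (Wset_open T).measurableSet
    · refine Eventually.of_forall fun z => ?_
      by_cases hz : z ∈ Wset T
      · rw [indicator_of_mem hz, indicator_of_mem, indicator_of_mem]
        · refine (hQb z.2 z.1 hz.1 hz.2.1 hz.2.2).trans ?_
          exact mul_le_mul_of_nonneg_left (kernel_bound h0 h1 hz.1 hz.2.1) (by positivity)
        · exact ⟨sub_pos.2 hz.2.1, by linarith [hz.1, hz.2.2]⟩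
        · exact ⟨hz.1, hz.2.1.trans hz.2.2⟩
      · rw [indicator_of_notMem hz, norm_zero]
        have : ∀ q x : ℝ, 0 ≤ (Ioo 0 T).indicator (fun x : ℝ => x ^ q) x := fun q x =>
          indicator_nonneg (fun y hy => Real.rpow_nonneg hy.1.le _) x
        have := mul_nonneg (this (α ^ 2 - 1) z.2) (this (α * (1 - α) - 1) (z.1 - z.2))
        positivity
  · intro p τ hp hpτ hτ
    have hcurve : ∀ r ∈ Ioo p τ, (r, p) ∈ Wset T := fun r hr => ⟨hp, hr.1, hr.2.trans hτ⟩
    have hD : ∀ r ∈ Ioo p τ, HasDerivAt (fun r => (r - p) ^ (-α) *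
        (s' p * ∫ y in (s p)..(s r), N p y)) (Q r p) r := by
      intro r hr
      have hrp : r - p ≠ 0 := (sub_pos.2 hr.1).ne'
      have d1 : HasDerivAt (fun r => (r - p) ^ (-α)) (-α * (r - p) ^ (-α - 1)) r := by
        have := ((hasDerivAt_id r).sub_const p).rpow_const (p := -α) (Or.inl hrp)
        simpa using this
      have hc : Continuous (N p) := hN.comp (continuous_const.prodMk continuous_id)
      have d2 : HasDerivAt (fun u => ∫ y in (s p)..u, N p y) (N p (s r)) (s r) :=
        intervalIntegral.integral_hasDerivAt_right (hc.intervalIntegrable _ _)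
          hc.stronglyMeasurable.stronglyMeasurableAtFilter hc.continuousAt
      have d3 := d2.comp r (hsd r ⟨hp.trans hr.1, hr.2.trans hτ⟩)
      exact d1.mul (d3.const_mul (s' p))
    have hint : IntervalIntegrable (fun r => Q r p) volume p τ := by
      rw [intervalIntegrable_iff_integrableOn_Ioo_of_le hpτ.le]
      have hi : IntegrableOn (fun r => (2 * L * C * C) * (p ^ (α - 1) * (r - p) ^ (-α) * p ^ (α - 1)))
          (Ioo p τ) := by
        rw [← intervalIntegrable_iff_integrableOn_Ioo_of_le hpτ.le]
        have := (intervalIntegral.intervalIntegrable_rpow' (r := -α) (a := 0) (b := τ - p)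
          (by linarith)).comp_sub_right p
        simp only [zero_add, sub_add_cancel] at this
        exact ((this.const_mul _).mul_const _).const_mul _
      refine hi.mono' ?_ ?_
      · refine ContinuousOn.aestronglyMeasurable ?_ measurableSet_Ioo
        exact hQc.comp (f := fun r => (r, p)) (continuous_id.prodMk continuous_const).continuousOn
          hcurve
      · refine (ae_restrict_mem measurableSet_Ioo).mono fun r hr => ?_
        refine (hQb p r hp hr.1 (hr.2.trans hτ)).trans ?_
        have : r ^ (α - 1) ≤ p ^ (α - 1) :=
          Real.rpow_le_rpow_of_nonpos hp hr.1.le (by linarith)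
        have : 0 ≤ r - p := sub_nonneg.2 hr.1.le
        gcongr
    have hcH : Continuous fun r => s' p * ∫ y in (s p)..(s r), N p y :=
      continuous_const.mul (hHc.comp (continuous_id.prodMk continuous_const))
    rw [intervalIntegral.integral_eq_sub_of_hasDerivAt_of_tendsto hpτ hD hint (fa := 0)
      (fb := (τ - p) ^ (-α) * (s' p * ∫ y in (s p)..(s τ), N p y)), sub_zero]
    · -- limit at p
      have hlim : Tendsto (fun r : ℝ => (r - p) ^ (1 - α) * (|s' p| * (L * (C * p ^ (α - 1)))))
          (𝓝[>] p) (𝓝 0) := by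
        have : ContinuousAt (fun r : ℝ => (r - p) ^ (1 - α) * (|s' p| * (L * (C * p ^ (α - 1))))) p :=
          ((continuousAt_id.sub continuousAt_const).rpow_const (Or.inr (by linarith))).mul
            continuousAt_const
        have h2 := this.tendsto
        simp only [sub_self, Real.zero_rpow (show 1 - α ≠ 0 by linarith), zero_mul] at h2
        exact h2.mono_left nhdsWithin_le_nhds
      refine squeeze_zero_norm' ?_ hlim
      filter_upwards [Ioo_mem_nhdsGT hpτ] with r hr
      have hrp : 0 < r - p := sub_pos.2 hr.1
      rw [Real.norm_eq_abs, abs_mul, abs_mul, abs_of_pos (Real.rpow_pos_of_pos hrp _)]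
      have h3 := hH p r hp hr.1 (hr.2.trans hτ)
      have : r ^ (α - 1) ≤ p ^ (α - 1) :=
          Real.rpow_le_rpow_of_nonpos hp hr.1.le (by linarith)
      have e : (r - p) ^ (1 - α) = (r - p) ^ (-α) * (r - p) := by
        rw [← Real.rpow_add_one hrp.ne']; congr 1; ring
      calc _ ≤ (r - p) ^ (-α) * (|s' p| * (L * (C * p ^ (α - 1) * (r - p)))) := by
            gcongr
            exact h3.trans (by gcongr)
        _ = _ := by rw [e]; ring
    · have : ContinuousAt (fun r => (r - p) ^ (-α) *
          (s' p * ∫ y in (s p)..(s r), N p y)) τ :=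
        ((continuousAt_id.sub continuousAt_const).rpow_const
          (Or.inl (sub_pos.2 hpτ).ne')).mul hcH.continuousAt
      exact this.tendsto.mono_left nhdsWithin_le_nhds

/-- `F_n(x,σ)`. -/
noncomputable def Ff (n : ℕ) (x σ : ℝ) : ℝ :=
  Real.sqrt (2 / σ) * Real.cos (Real.pi / σ * (n + 1 / 2) * x)

noncomputable def ff (b : ℝ) (n : ℕ) (x σ : ℝ) : ℝ :=
  (-2 / (max σ b) ^ 2) / (2 * Real.sqrt (2 / max σ b)) *
      Real.cos (Real.pi / max σ b * (n + 1 / 2) * x) +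
    Real.sqrt (2 / max σ b) * (-Real.sin (Real.pi / max σ b * (n + 1 / 2) * x) *
      (-Real.pi / (max σ b) ^ 2 * (n + 1 / 2) * x))

lemma ff_cont {b : ℝ} (hb : 0 < b) (n : ℕ) : Continuous (fun z : ℝ × ℝ => ff b n z.1 z.2) := by
  have hc : Continuous (fun z : ℝ × ℝ => max z.2 b) := continuous_snd.max continuous_const
  have hp : ∀ z : ℝ × ℝ, 0 < max z.2 b := fun z => lt_max_of_lt_right hb
  have h0 : ∀ z : ℝ × ℝ, max z.2 b ≠ 0 := fun z => (hp z).ne'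
  have h1 : ∀ z : ℝ × ℝ, (max z.2 b) ^ 2 ≠ 0 := fun z => pow_ne_zero _ (h0 z)
  have h2 : ∀ z : ℝ × ℝ, 2 * Real.sqrt (2 / max z.2 b) ≠ 0 := fun z => by
    have := hp z
    positivity
  have c0 : Continuous (fun z : ℝ × ℝ => Real.sqrt (2 / max z.2 b)) :=
    (continuous_const.div hc h0).sqrt
  have c1 : Continuous (fun z : ℝ × ℝ => Real.pi / max z.2 b * ((n : ℝ) + 1 / 2) * z.1) :=
    ((continuous_const.div hc h0).mul continuous_const).mul continuous_fst
  have c2 : Continuous (fun z : ℝ × ℝ => -Real.pi / (max z.2 b) ^ 2 * ((n : ℝ) + 1 / 2) * z.1) :=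
    ((continuous_const.div (hc.pow 2) h1).mul continuous_const).mul continuous_fst
  have c3 : Continuous (fun z : ℝ × ℝ =>
      (-2 / (max z.2 b) ^ 2) / (2 * Real.sqrt (2 / max z.2 b))) :=
    (continuous_const.div (hc.pow 2) h1).div (continuous_const.mul c0) h2
  exact (c3.mul (Real.continuous_cos.comp c1)).add
    (c0.mul ((Real.continuous_sin.comp c1).neg.mul c2))

lemma Ff_deriv {b : ℝ} (hb : 0 < b) (n : ℕ) (x σ : ℝ) (hσ : b ≤ σ) :
    HasDerivAt (Ff n x) (ff b n x σ) σ := by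
  have h0 : 0 < σ := hb.trans_le hσ
  have hi : ∀ c : ℝ, HasDerivAt (fun σ : ℝ => c / σ) (-c / σ ^ 2) σ := by
    intro c
    have := (hasDerivAt_inv h0.ne').const_mul c
    have e : -c / σ ^ 2 = c * -(σ ^ 2)⁻¹ := by ring
    rw [e]
    exact this
  have d1 : HasDerivAt (fun σ : ℝ => Real.sqrt (2 / σ)) ((-2 / σ ^ 2) / (2 * Real.sqrt (2 / σ))) σ :=
    (hi 2).sqrt (by positivity)
  have d2 := (((hi Real.pi).mul_const ((n : ℝ) + 1 / 2)).mul_const x).cos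
  have := d1.mul d2
  unfold ff
  rw [max_eq_left hσ]
  exact this

noncomputable def Mf (b : ℝ) (n k : ℕ) (σ r : ℝ) : ℝ := ∫ x in (0:ℝ)..σ, ff b n x σ * ff b k x r

lemma Mf_cont {b : ℝ} (hb : 0 < b) (n k : ℕ) : Continuous (fun z : ℝ × ℝ => Mf b n k z.1 z.2) := by
  refine intervalIntegral.continuous_parametric_intervalIntegral_of_continuous
    (f := fun (z : ℝ × ℝ) x => ff b n x z.1 * ff b k x z.2) ?_ continuous_fst
  exact ((ff_cont hb n).comp (continuous_snd.prodMk (continuous_fst.comp continuous_fst))).mul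
    ((ff_cont hb k).comp (continuous_snd.prodMk (continuous_snd.comp continuous_fst)))

lemma phi_eq (s : ℝ → ℝ) (n : ℕ) (x t : ℝ) : phi s n x t = Ff n x (s t) := rfl

lemma Dtil_eq {b : ℝ} (hb : 0 < b) (s : ℝ → ℝ) (m : ℕ) (p τ dp : ℝ) (hp : b ≤ s p) (hτ : b ≤ s τ)
    (hd : HasDerivAt s dp p) (n k : Fin (m + 1)) :
    Dtil s m p τ n k = dp * ∫ y in (s p)..(s τ), Mf b n k (s p) y := by
  have e1 : ∀ x, deriv (fun r => phi s n x r) p = dp * ff b n x (s p) := by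
    intro x
    have := (Ff_deriv hb n x (s p) hp).comp p hd
    rw [mul_comm]
    exact this.deriv
  have e2 : ∀ x, phi s k x τ - phi s k x p = ∫ y in (s p)..(s τ), ff b k x y := by
    intro x
    rw [phi_eq, phi_eq, intervalIntegral.integral_eq_sub_of_hasDerivAt (f := Ff k x)]
    · intro y hy
      refine Ff_deriv hb k x y ?_
      rcases hy with ⟨h, -⟩
      exact (le_min hp hτ).trans h
    · exact ((ff_cont hb k).comp (continuous_const.prodMk continuous_id)).intervalIntegrable _ _
  have : Dtil s m p τ n k = ∫ x in (0:ℝ)..(s p), ∫ y in (s p)..(s τ),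
      dp * (ff b n x (s p) * ff b k x y) := by
    unfold Dtil
    simp only [Matrix.of_apply]
    refine intervalIntegral.integral_congr fun x _ => ?_
    simp only [e1, e2]
    rw [← intervalIntegral.integral_const_mul]
    simp only [mul_assoc]
  rw [this, intervalIntegral_intervalIntegral_swap, ← intervalIntegral.integral_const_mul]
  · refine intervalIntegral.integral_congr fun y _ => ?_
    simp only [Mf]
    rw [← intervalIntegral.integral_const_mul]
  · have hc : Continuous (Function.uncurry fun x y => dp * (ff b n x (s p) * ff b k x y)) :=
      continuous_const.mul (((ff_cont hb n).comp (continuous_fst.prodMk continuous_const)).mul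
        (ff_cont hb k))
    refine (hc.continuousOn.integrableOn_compact
      (isCompact_uIcc.prod isCompact_uIcc)).mono_set (prod_mono uIoc_subset_uIcc uIoc_subset_uIcc)

/-- If `v ∈ C([0,T];ℝ^{m+1})`, then
`g₁(τ) = ∫₀^τ (τ−p)^{−α} D̃(p,τ) v(p) dp` has an absolutely continuous representative
`g̃₁` with `g̃₁(0) = 0`. -/
theorem stmt_8 (α T b : ℝ) (m : ℕ) (hα : α ∈ Set.Ioo (0:ℝ) 1) (hT : 0 < T) (hb : 0 < b)
    (s s' : ℝ → ℝ)
    (hs'int : IntegrableOn s' (Set.Icc 0 T))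
    (hsAC : ∀ t ∈ Set.Icc (0:ℝ) T, s t = b + ∫ τ in (0:ℝ)..t, s' τ)
    (hs'pos : ∀ t ∈ Set.Icc (0:ℝ) T, 0 ≤ s' t)
    (hs'cont : ContinuousOn (fun t : ℝ => t ^ (1 - α) * s' t) (Set.Icc 0 T))
    (v : ℝ → Fin (m + 1) → ℝ) (hv : ContinuousOn v (Set.Icc 0 T)) :
    ∃ g₁ : ℝ → Fin (m + 1) → ℝ,
      (∃ d : ℝ → Fin (m + 1) → ℝ, IntegrableOn d (Set.Icc 0 T) ∧
        ∀ τ ∈ Set.Icc (0:ℝ) T, g₁ τ = g₁ 0 + ∫ p in (0:ℝ)..τ, d p) ∧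
      g₁ 0 = 0 ∧
      ∀ᵐ τ ∂(volume.restrict (Set.Ioo 0 T)),
        g₁ τ = ∫ p in (0:ℝ)..τ, ((τ - p) ^ (-α)) • (Dtil s m p τ).mulVec (v p) := by
  obtain ⟨h0, h1⟩ := hα
  have hs'eq : ∀ t : ℝ, 0 < t → s' t = t ^ (α - 1) * (t ^ (1 - α) * s' t) := by
    intro t ht
    rw [← mul_assoc, ← Real.rpow_add ht]; simp
  have hs'c : ContinuousOn s' (Ioo 0 T) := by
    have : ContinuousOn (fun t : ℝ => t ^ (α - 1) * (t ^ (1 - α) * s' t)) (Ioo 0 T) :=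
      (continuousOn_id.rpow_const (fun t ht => Or.inl ht.1.ne')).mul
        (hs'cont.mono Ioo_subset_Icc_self)
    exact this.congr fun t ht => hs'eq t ht.1
  obtain ⟨C₀, hC₀⟩ := isCompact_Icc.exists_bound_of_continuousOn hs'cont
  have hC₀0 : 0 ≤ C₀ := (norm_nonneg _).trans (hC₀ 0 ⟨le_rfl, hT.le⟩)
  have hb0 : ∀ t ∈ Ioc 0 T, |s' t| ≤ C₀ * t ^ (α - 1) := by
    intro t ht
    rw [hs'eq t ht.1, abs_mul, abs_of_pos (Real.rpow_pos_of_pos ht.1 _), mul_comm]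
    exact mul_le_mul_of_nonneg_right (hC₀ t ⟨ht.1.le, ht.2⟩) (Real.rpow_nonneg ht.1.le _)
  have hii : ∀ p τ, 0 ≤ p → p ≤ τ → τ ≤ T → IntervalIntegrable s' volume p τ := by
    intro p τ hp hpτ hτ
    rw [intervalIntegrable_iff_integrableOn_Icc_of_le hpτ]
    exact hs'int.mono_set (Icc_subset_Icc hp hτ)
  have hdiff : ∀ p τ, 0 ≤ p → p ≤ τ → τ ≤ T → s τ - s p = ∫ r in p..τ, s' r := by
    intro p τ hp hpτ hτ
    rw [hsAC p ⟨hp, hpτ.trans hτ⟩, hsAC τ ⟨hp.trans hpτ, hτ⟩, add_sub_add_left_eq_sub,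
      intervalIntegral.integral_interval_sub_left]
    · exact hii 0 τ le_rfl (hp.trans hpτ) hτ
    · exact hii 0 p le_rfl hp (hpτ.trans hτ)
  have hsb : ∀ t ∈ Icc 0 T, b ≤ s t := by
    intro t ht
    rw [hsAC t ht]
    have : 0 ≤ ∫ τ in (0:ℝ)..t, s' τ :=
      intervalIntegral.integral_nonneg ht.1 fun u hu => hs'pos u ⟨hu.1, hu.2.trans ht.2⟩
    linarith
  have hscont : ContinuousOn s (Icc 0 T) := by
    have := intervalIntegral.continuousOn_primitive_interval (μ := volume) (f := s') (a := 0) (b := T)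
      (by rwa [uIcc_of_le hT.le])
    rw [uIcc_of_le hT.le] at this
    exact (continuousOn_const.add this).congr hsAC
  have hsd : ∀ t ∈ Ioo 0 T, HasDerivAt s (s' t) t := by
    intro t ht
    have h : HasDerivAt (fun u => ∫ x in (0:ℝ)..u, s' x) (s' t) t :=
      intervalIntegral.integral_hasDerivAt_right (hii 0 t le_rfl ht.1.le ht.2.le)
        (hs'c.stronglyMeasurableAtFilter isOpen_Ioo t ht) (hs'c.continuousAt (isOpen_Ioo.mem_nhds ht))
    refine (h.const_add b).congr_of_eventuallyEq ?_
    filter_upwards [isOpen_Ioo.mem_nhds ht] with u hu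
    exact hsAC u ⟨hu.1.le, hu.2.le⟩
  have hb2 : ∀ p τ, 0 < p → p < τ → τ < T → |s τ - s p| ≤ C₀ / α * τ ^ (α - 1) * (τ - p) := by
    intro p τ hp hpτ hτ
    rw [hdiff p τ hp.le hpτ.le hτ.le]
    have h := intervalIntegral.norm_integral_le_of_norm_le (μ := volume) (f := s')
      (g := fun r => C₀ * r ^ (α - 1)) hpτ.le
      (Eventually.of_forall fun t ht => hb0 t ⟨hp.trans ht.1, ht.2.trans hτ.le⟩)
      ((intervalIntegral.intervalIntegrable_rpow' (by linarith)).const_mul _)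
    rw [intervalIntegral.integral_const_mul, integral_rpow (Or.inl (by linarith)),
      sub_add_cancel] at h
    refine h.trans ?_
    have hτ0 : 0 < τ := hp.trans hpτ
    have e1 : τ ^ α = τ ^ (α - 1) * τ := by
      rw [← Real.rpow_add_one hτ0.ne']; simp
    have e2 : p ^ α = p ^ (α - 1) * p := by
      rw [← Real.rpow_add_one hp.ne']; simp
    have e3 : τ ^ (α - 1) ≤ p ^ (α - 1) :=
      Real.rpow_le_rpow_of_nonpos hp hpτ.le (by linarith)
    have e4 : τ ^ α - p ^ α ≤ τ ^ (α - 1) * (τ - p) := by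
      rw [e1, e2]; nlinarith
    calc C₀ * ((τ ^ α - p ^ α) / α) = C₀ / α * (τ ^ α - p ^ α) := by ring
      _ ≤ C₀ / α * (τ ^ (α - 1) * (τ - p)) := by gcongr
      _ = _ := by ring
  -- extensions
  set se : ℝ → ℝ := IccExtend hT.le ((Icc 0 T).domRestrict s) with hse
  set ve : ℝ → Fin (m + 1) → ℝ := IccExtend hT.le ((Icc 0 T).domRestrict v) with hve
  have hsec : Continuous se := hscont.domRestrict.Icc_extend'
  have hvec : Continuous ve := hv.domRestrict.Icc_extend'
  have hseq : ∀ t ∈ Icc 0 T, se t = s t := fun t ht => IccExtend_of_mem hT.le _ ht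
  have hveq : ∀ t ∈ Icc 0 T, ve t = v t := fun t ht => IccExtend_of_mem hT.le _ ht
  have hCC : C₀ ≤ C₀ / α := by
    rw [le_div_iff₀ h0]; nlinarith
  have K : ∀ n : Fin (m + 1), _ := fun n => keyl (C := C₀ / α) h0 h1 hT (by positivity) se s' hsec hs'c
    (by
      intro t ht
      refine (hsd t ht).congr_of_eventuallyEq ?_
      filter_upwards [isOpen_Ioo.mem_nhds ht] with u hu
      exact hseq u ⟨hu.1.le, hu.2.le⟩)
    (by
      intro t ht
      refine (hb0 t ⟨ht.1, ht.2.le⟩).trans ?_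
      exact mul_le_mul_of_nonneg_right hCC (Real.rpow_nonneg ht.1.le _))
    (by
      intro p τ hp hpτ hτ
      rw [hseq τ ⟨(hp.trans hpτ).le, hτ.le⟩, hseq p ⟨hp.le, (hpτ.trans hτ).le⟩]
      exact hb2 p τ hp hpτ hτ)
    (fun p y => ∑ k : Fin (m + 1), Mf b n k (se p) y * ve p k)
    (by
      refine continuous_finsetSum _ fun k _ => ?_
      exact ((Mf_cont hb n k).comp ((hsec.comp continuous_fst).prodMk continuous_snd)).mul
        ((continuous_apply k).comp (hvec.comp continuous_fst)))
  choose d hd hdτ using K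
  have hdv : IntegrableOn (fun p n => d n p) (Icc 0 T) := Integrable.of_eval fun n => hd n
  refine ⟨fun τ => ∫ p in (0:ℝ)..τ, (fun n => d n p), ⟨fun p n => d n p, hdv, ?_⟩, ?_, ?_⟩
  · intro τ hτ
    simp
  · simp
  · refine (ae_restrict_mem measurableSet_Ioo).mono fun τ hτ => ?_
    have hE : ∀ p ∈ Ioo 0 τ, ∀ n, (((τ - p) ^ (-α)) • (Dtil s m p τ).mulVec (v p)) n =
        (τ - p) ^ (-α) * (s' p * ∫ y in (se p)..(se τ),
          ∑ k : Fin (m + 1), Mf b n k (se p) y * ve p k) := by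
      intro p hp n
      have hpm : p ∈ Icc 0 T := ⟨hp.1.le, (hp.2.trans hτ.2).le⟩
      have hτm : τ ∈ Icc 0 T := ⟨hτ.1.le, hτ.2.le⟩
      rw [hseq p hpm, hseq τ hτm, hveq p hpm, Pi.smul_apply, smul_eq_mul]
      congr 1
      rw [intervalIntegral.integral_finsetSum, Finset.mul_sum]
      · simp only [Matrix.mulVec, dotProduct]
        refine Finset.sum_congr rfl fun k _ => ?_
        rw [Dtil_eq hb s m p τ (s' p) (hsb p hpm) (hsb τ hτm)
          (hsd p ⟨hp.1, hp.2.trans hτ.2⟩) n k, intervalIntegral.integral_mul_const, mul_assoc]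
      · intro k _
        exact (((Mf_cont hb n k).comp (continuous_const.prodMk continuous_id)).mul
          continuous_const).intervalIntegrable _ _
    funext n
    obtain ⟨i1, i2⟩ := hdτ n τ hτ
    have r1 : (∫ p in (0:ℝ)..τ, (fun n => d n p)) n = ∫ p in (0:ℝ)..τ, d n p := by
      rw [intervalIntegral.integral_of_le hτ.1.le, intervalIntegral.integral_of_le hτ.1.le]
      refine eval_integral (f := fun p n => d n p) (fun n => ?_) n
      exact (hd n).mono_set (Ioc_subset_Icc_self.trans (Icc_subset_Icc le_rfl hτ.2.le))
    refine r1.trans ?_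
    rw [← i2, intervalIntegral.integral_of_le hτ.1.le, intervalIntegral.integral_of_le hτ.1.le,
      integral_Ioc_eq_integral_Ioo, integral_Ioc_eq_integral_Ioo, eval_integral]
    · exact setIntegral_congr_fun measurableSet_Ioo fun p hp => (hE p hp n).symm
    · intro n
      exact (hdτ n τ hτ).1.congr_fun (fun p hp => (hE p hp n).symm) measurableSet_Ioo
end

section
/- Let α ∈ (0,1), T > 0, b > 0, let s : [0,T] → ℝ be absolutely continuous with s(0) = b, ṡ ≥ 0, and t ↦ t^{1−α} ṡ(t) continuous on [0,T], and let m ∈ ℕ. If w : (0,T) → ℝ^{m+1} is measurable with p ↦ p^{1−α} w(p) ∈ L^∞(0,T), then the function g₂(τ) = ∫₀^τ (τ−p)^{−α} B(p,τ) w(p) dp has an absolutely continuous representative: there exists g̃₂ ∈ AC([0,T]; ℝ^{m+1}) with g̃₂(0) = 0 and g₂ = g̃₂ almost everywhere on [0,T]. -/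
open MeasureTheory Set Filter
open scoped Topology

/-- `B(τ,t)_{n,k} = ∫₀^{s(τ)} φ_n(x,τ)[φ_k(x,t) − φ_k(x,τ)] dx`. -/
noncomputable def Bmat (s : ℝ → ℝ) (m : ℕ) (τ t : ℝ) :
    Matrix (Fin (m + 1)) (Fin (m + 1)) ℝ :=
  Matrix.of fun n k : Fin (m + 1) =>
    ∫ x in (0:ℝ)..(s τ), phi s n x τ * (phi s k x t - phi s k x τ)

lemma pow_int_ind (T a : ℝ) (hT : 0 < T) (ha : -1 < a) :
    Integrable (Set.indicator (Set.Ioc 0 T) (fun x : ℝ => x ^ a)) := by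
  rw [integrable_indicator_iff measurableSet_Ioc]
  have := intervalIntegral.intervalIntegrable_rpow' (a := 0) (b := T) ha
  rwa [intervalIntegrable_iff_integrableOn_Ioc_of_le hT.le] at this

lemma fub_s9 (T : ℝ) (hT : 0 < T) (k K : ℝ → ℝ → ℝ) (u : ℝ → ℝ) (a e f C M : ℝ)
    (ha : -1 < a) (hef : -1 < e + f) (hC : 0 ≤ C) (hM : 0 ≤ M)
    (hk : ContinuousOn (fun z : ℝ × ℝ => k z.1 z.2) {z | 0 < z.1 ∧ z.1 < z.2 ∧ z.2 ≤ T})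
    (hbd : ∀ p q, 0 < p → p < q → q ≤ T → |k p q| ≤ C * ((q - p) ^ a * p ^ e))
    (hu : AEStronglyMeasurable u (volume.restrict (Set.Ioo 0 T)))
    (hub : ∀ᵐ p ∂(volume.restrict (Set.Ioo 0 T)), |u p| ≤ M * p ^ f)
    (hK : ∀ p τ, 0 < p → p < τ → τ ≤ T → ∫ q in p..τ, k p q = K p τ) :
    ∃ d : ℝ → ℝ, IntegrableOn d (Set.Icc 0 T) ∧ ∀ τ ∈ Set.Icc (0:ℝ) T,
      IntervalIntegrable (fun p => K p τ * u p) volume 0 τ ∧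
      ∫ p in (0:ℝ)..τ, K p τ * u p = ∫ q in (0:ℝ)..τ, d q := by
  set U : Set (ℝ × ℝ) := {z | 0 < z.1 ∧ z.1 < z.2 ∧ z.2 ≤ T} with hU
  have hUm : MeasurableSet U := by
    apply MeasurableSet.inter (measurableSet_lt measurable_const measurable_fst)
    exact MeasurableSet.inter (measurableSet_lt measurable_fst measurable_snd)
      (measurableSet_le measurable_snd measurable_const)
  set u0 : ℝ → ℝ := Set.indicator (Set.Ioo 0 T) u with hu0
  have hu0m : AEStronglyMeasurable u0 volume := by
    rwa [hu0, aestronglyMeasurable_indicator_iff measurableSet_Ioo]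
  set Φ : ℝ × ℝ → ℝ := fun z => U.indicator (fun z : ℝ × ℝ => k z.1 z.2) z * u0 z.1 with hΦ
  have hΦm : AEStronglyMeasurable Φ (volume.prod volume) := by
    apply AEStronglyMeasurable.mul
    · rw [aestronglyMeasurable_indicator_iff hUm]
      exact hk.aestronglyMeasurable hUm
    · exact hu0m.comp_fst
  have hH : Integrable (fun z : ℝ × ℝ =>
      (Set.indicator (Set.Ioc 0 T) (fun x : ℝ => x ^ (e + f))) z.1 *
      (Set.indicator (Set.Ioc 0 T) (fun x : ℝ => x ^ a)) (z.2 - z.1)) (volume.prod volume) := by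
    have := (Integrable.convolution_integrand (ContinuousLinearMap.mul ℝ ℝ)
      (pow_int_ind T (e + f) hT hef) (pow_int_ind T a hT ha)).swap
    exact this
  have hub' : ∀ᵐ p : ℝ, p ∈ Set.Ioo 0 T → |u p| ≤ M * p ^ f :=
    (ae_restrict_iff' measurableSet_Ioo).1 hub
  have hub2 : ∀ᵐ z : ℝ × ℝ ∂(volume.prod volume), z.1 ∈ Set.Ioo 0 T → |u z.1| ≤ M * z.1 ^ f :=
    Measure.quasiMeasurePreserving_fst.ae hub'
  have hΦi : Integrable Φ (volume.prod volume) := by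
    refine (hH.const_mul (C * M)).mono' hΦm ?_
    filter_upwards [hub2] with z hz
    by_cases hzU : z ∈ U
    · obtain ⟨h1, h2, h3⟩ := hzU
      have hp : z.1 ∈ Set.Ioo 0 T := ⟨h1, h2.trans_le h3⟩
      have hq : z.2 - z.1 ∈ Set.Ioc 0 T := ⟨by linarith, by linarith⟩
      simp only [hΦ, hu0]
      rw [Set.indicator_of_mem (show z ∈ U from ⟨h1, h2, h3⟩), Set.indicator_of_mem hp,
        Set.indicator_of_mem (Set.Ioo_subset_Ioc_self hp), Set.indicator_of_mem hq,
        norm_mul, Real.norm_eq_abs, Real.norm_eq_abs, Real.rpow_add h1]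
      have hb1 := hbd z.1 z.2 h1 h2 h3
      have hb2 := hz hp
      calc |k z.1 z.2| * |u z.1| ≤ (C * ((z.2 - z.1) ^ a * z.1 ^ e)) * (M * z.1 ^ f) := by
            apply mul_le_mul hb1 hb2 (abs_nonneg _)
            exact (abs_nonneg _).trans hb1
        _ = _ := by ring
    · simp only [hΦ]
      rw [Set.indicator_of_notMem hzU]
      simp only [zero_mul, norm_zero]
      have h1 : 0 ≤ Set.indicator (Set.Ioc 0 T) (fun x : ℝ => x ^ (e+f)) z.1 :=
        Set.indicator_nonneg (fun x hx => Real.rpow_nonneg hx.1.le _) _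
      have h2 : 0 ≤ Set.indicator (Set.Ioc 0 T) (fun x : ℝ => x ^ a) (z.2 - z.1) :=
        Set.indicator_nonneg (fun x hx => Real.rpow_nonneg hx.1.le _) _
      positivity
  refine ⟨fun q => ∫ p, Φ (p, q), hΦi.integral_prod_right.integrableOn, ?_⟩
  intro τ hτ
  have hI : Integrable Φ (volume.prod (volume.restrict (Set.Ioc 0 τ))) := by
    have : (volume : Measure ℝ).prod (volume.restrict (Set.Ioc 0 τ)) =
      (volume.prod volume).restrict (Set.univ ×ˢ Set.Ioc 0 τ) := by
      rw [← Measure.prod_restrict, Measure.restrict_univ]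
    rw [this]
    exact hΦi.restrict
  have key : ∀ p, (∫ q in Set.Ioc 0 τ, Φ (p, q)) =
      Set.indicator (Set.Ioo 0 τ) (fun p => K p τ * u p) p := by
    intro p
    by_cases hp : p ∈ Set.Ioo 0 τ
    · rw [Set.indicator_of_mem hp, ← hK p τ hp.1 hp.2 hτ.2,
        intervalIntegral.integral_of_le hp.2.le, ← integral_mul_const]
      have : ∀ q ∈ Set.Ioc 0 τ, Φ (p, q) = (Set.Ioc p τ).indicator (fun q => k p q * u p) q := by
        intro q hq
        have hpT : p ∈ Set.Ioo 0 T := ⟨hp.1, hp.2.trans_le hτ.2⟩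
        by_cases hpq : p < q
        · rw [Set.indicator_of_mem (show q ∈ Set.Ioc p τ from ⟨hpq, hq.2⟩)]
          simp only [hΦ, hu0]
          rw [Set.indicator_of_mem hpT,
            Set.indicator_of_mem (show (p, q) ∈ U from ⟨hp.1, hpq, hq.2.trans hτ.2⟩)]
        · rw [Set.indicator_of_notMem (fun h => hpq h.1)]
          simp only [hΦ]
          rw [Set.indicator_of_notMem (fun h : (p, q) ∈ U => hpq h.2.1), zero_mul]
      rw [setIntegral_congr_fun measurableSet_Ioc this, setIntegral_indicator measurableSet_Ioc]
      congr 2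
      ext x
      simp only [Set.mem_inter_iff, Set.mem_Ioc]
      constructor
      · exact fun h => h.2
      · exact fun h => ⟨⟨hp.1.trans h.1, h.2⟩, h⟩
    · rw [Set.indicator_of_notMem hp]
      apply setIntegral_eq_zero_of_forall_eq_zero
      intro q hq
      simp only [hΦ]
      rw [Set.indicator_of_notMem, zero_mul]
      intro h
      exact hp ⟨h.1, h.2.1.trans_le hq.2⟩
  have hint := hI.integral_prod_left
  simp only [key] at hint
  have hsw := integral_integral_swap (f := fun p q => Φ (p, q)) hI
  simp only [key] at hsw
  rw [integral_indicator measurableSet_Ioo, ← integral_Ioc_eq_integral_Ioo] at hsw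
  rw [integrable_indicator_iff measurableSet_Ioo, ← integrableOn_Ioc_iff_integrableOn_Ioo] at hint
  rw [intervalIntegrable_iff_integrableOn_Ioc_of_le hτ.1, intervalIntegral.integral_of_le hτ.1,
    intervalIntegral.integral_of_le hτ.1]
  exact ⟨hint, hsw⟩

lemma s_facts (α T b : ℝ) (hα : α ∈ Set.Ioo (0:ℝ) 1) (hT : 0 < T) (hb : 0 < b)
    (s s' : ℝ → ℝ)
    (hs'int : IntegrableOn s' (Set.Icc 0 T))
    (hsAC : ∀ t ∈ Set.Icc (0:ℝ) T, s t = b + ∫ τ in (0:ℝ)..t, s' τ)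
    (hs'pos : ∀ t ∈ Set.Icc (0:ℝ) T, 0 ≤ s' t)
    (hs'cont : ContinuousOn (fun t : ℝ => t ^ (1 - α) * s' t) (Set.Icc 0 T)) :
    ContinuousOn s (Set.Icc 0 T) ∧ ContinuousOn s' (Set.Ioc 0 T) ∧
    (∀ t ∈ Set.Ioo (0:ℝ) T, HasDerivAt s (s' t) t) ∧
    (∀ t ∈ Set.Icc (0:ℝ) T, b ≤ s t) ∧ (∀ p q, 0 ≤ p → p ≤ q → q ≤ T → s p ≤ s q) ∧
    ∃ N, 0 ≤ N ∧ (∀ p q, 0 < p → p < q → q ≤ T →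
      s' q ≤ N * ((q - p) ^ (-(1-α)^2) * p ^ (-(α * (1-α))))) ∧
      (∀ p q, 0 < p → p < q → q ≤ T →
      s q - s p ≤ N * ((q - p) ^ (1-(1-α)^2) * p ^ (-(α * (1-α))))) := by
  obtain ⟨hα0, hα1⟩ := hα
  have hii : ∀ x y, x ∈ Set.Icc 0 T → y ∈ Set.Icc 0 T → IntervalIntegrable s' volume x y := by
    intro x y hx hy
    rw [intervalIntegrable_iff]
    apply hs'int.mono_set
    intro z hz
    rw [Set.mem_uIoc] at hz
    rcases hz with h | h
    · exact ⟨hx.1.trans h.1.le, h.2.trans hy.2⟩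
    · exact ⟨hy.1.trans h.1.le, h.2.trans hx.2⟩
  have h0 : (0:ℝ) ∈ Set.Icc 0 T := ⟨le_rfl, hT.le⟩
  have hsub : ∀ p q, 0 ≤ p → p ≤ q → q ≤ T → s q - s p = ∫ r in p..q, s' r := by
    intro p q hp hpq hq
    have hpm : p ∈ Set.Icc 0 T := ⟨hp, hpq.trans hq⟩
    have hqm : q ∈ Set.Icc 0 T := ⟨hp.trans hpq, hq⟩
    rw [hsAC p hpm, hsAC q hqm, ← intervalIntegral.integral_add_adjacent_intervals
      (hii 0 p h0 hpm) (hii p q hpm hqm)]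
    ring
  have hmono : ∀ p q, 0 ≤ p → p ≤ q → q ≤ T → s p ≤ s q := by
    intro p q hp hpq hq
    have := hsub p q hp hpq hq
    have h2 : 0 ≤ ∫ r in p..q, s' r := intervalIntegral.integral_nonneg hpq
      (fun r hr => hs'pos r ⟨hp.trans hr.1, hr.2.trans hq⟩)
    linarith
  have hs0 : s 0 = b := by rw [hsAC 0 h0]; simp
  have hc' : ContinuousOn s' (Set.Ioc 0 T) := by
    have h1 : ContinuousOn (fun t : ℝ => t ^ (α - 1) * (t ^ (1 - α) * s' t)) (Set.Ioc 0 T) := by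
      apply ContinuousOn.mul
      · intro t ht
        exact (Real.continuousAt_rpow_const t _ (Or.inl ht.1.ne')).continuousWithinAt
      · exact hs'cont.mono Set.Ioc_subset_Icc_self
    refine h1.congr ?_
    intro t ht
    simp only
    rw [← mul_assoc, ← Real.rpow_add ht.1]
    simp
  obtain ⟨N, hN⟩ := isCompact_Icc.exists_bound_of_continuousOn hs'cont
  have hN0 : 0 ≤ N := (norm_nonneg _).trans (hN 0 h0)
  have hbd1 : ∀ p q, 0 < p → p < q → q ≤ T →
      s' q ≤ N * ((q - p) ^ (-(1-α)^2) * p ^ (-(α * (1-α)))) := by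
    intro p q hp hpq hq
    have hq0 : 0 < q := hp.trans hpq
    have h1 : q ^ (1-α) * s' q ≤ N := (le_abs_self _).trans (hN q ⟨hq0.le, hq⟩)
    have h2 : s' q ≤ N * q ^ (α - 1) := by
      have h3 : s' q = q ^ (α - 1) * (q ^ (1 - α) * s' q) := by
        rw [← mul_assoc, ← Real.rpow_add hq0]
        simp
      rw [h3, mul_comm N]
      exact mul_le_mul_of_nonneg_left h1 (Real.rpow_nonneg hq0.le _)
    refine h2.trans (mul_le_mul_of_nonneg_left ?_ hN0)
    have h4 : α - 1 = (-(1-α)^2) + (-(α * (1-α))) := by ring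
    rw [h4, Real.rpow_add hq0]
    apply mul_le_mul
    · exact Real.rpow_le_rpow_of_nonpos (by linarith) (by linarith) (by nlinarith)
    · exact Real.rpow_le_rpow_of_nonpos hp hpq.le (by nlinarith)
    · exact Real.rpow_nonneg hq0.le _
    · exact Real.rpow_nonneg (by linarith) _
  have hβ : (1 - α)^2 < 1 := by nlinarith
  refine ⟨?_, hc', ?_, ?_, hmono, N / (1 - (1-α)^2) + N, by
    have : 0 < 1 - (1-α)^2 := by linarith
    positivity, ?_, ?_⟩
  · have := intervalIntegral.continuousOn_primitive_interval (a := 0) (b := T) (f := s') (μ := volume)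
      (by rwa [Set.uIcc_of_le hT.le])
    rw [Set.uIcc_of_le hT.le] at this
    exact (continuousOn_const.add this).congr hsAC
  · intro t ht
    have hcat : ContinuousAt s' t := hc'.continuousAt (Ioc_mem_nhds ht.1 ht.2)
    have h1 := intervalIntegral.integral_hasDerivAt_right (hii 0 t h0 ⟨ht.1.le, ht.2.le⟩)
      (ContinuousOn.stronglyMeasurableAtFilter isOpen_Ioo (hc'.mono Set.Ioo_subset_Ioc_self) t ht) hcat
    refine (h1.const_add b).congr_of_eventuallyEq ?_
    filter_upwards [Icc_mem_nhds ht.1 ht.2] with x hx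
    exact hsAC x hx
  · intro t ht
    rw [← hs0]
    exact hmono 0 t le_rfl ht.1 ht.2
  · intro p q hp hpq hq
    refine (hbd1 p q hp hpq hq).trans (mul_le_mul_of_nonneg_right ?_ ?_)
    · have : 0 ≤ N / (1 - (1-α)^2) := div_nonneg hN0 (by linarith)
      linarith
    · exact mul_nonneg (Real.rpow_nonneg (by linarith) _) (Real.rpow_nonneg hp.le _)
  · intro p q hp hpq hq
    rw [hsub p q hp.le hpq.le hq]
    have hri : IntervalIntegrable (fun r : ℝ => (r - p) ^ (-(1-α)^2)) volume p q := by
      have h := (intervalIntegral.intervalIntegrable_rpow' (a := 0) (b := q - p)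
        (r := -(1-α)^2) (by linarith)).comp_sub_right p
      simpa using h
    have h1 : ∫ r in p..q, s' r ≤
        ∫ r in p..q, N * ((r - p) ^ (-(1-α)^2) * p ^ (-(α * (1-α)))) := by
      apply intervalIntegral.integral_mono_on_of_le_Ioo hpq.le
      · exact hii p q ⟨hp.le, hpq.le.trans hq⟩ ⟨hp.le.trans hpq.le, hq⟩
      · exact (hri.mul_const _).const_mul _
      · intro r hr
        exact hbd1 p r hp hr.1 (hr.2.le.trans hq)
    refine h1.trans ?_
    rw [intervalIntegral.integral_const_mul, intervalIntegral.integral_mul_const,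
      intervalIntegral.integral_comp_sub_right (fun x => x ^ (-(1-α)^2)) p,
      integral_rpow (Or.inl (by linarith))]
    rw [sub_self, Real.zero_rpow (by linarith), sub_zero]
    have e1 : -(1-α)^2 + 1 = 1 - (1-α)^2 := by ring
    rw [e1]
    have h5 : 0 ≤ N * ((q-p) ^ (1 - (1-α)^2) * p ^ (-(α * (1-α)))) :=
      mul_nonneg hN0 (mul_nonneg (Real.rpow_nonneg (by linarith) _) (Real.rpow_nonneg hp.le _))
    calc _ = N / (1 - (1-α)^2) * ((q-p) ^ (1 - (1-α)^2) * p ^ (-(α * (1-α)))) := by ring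
      _ ≤ _ := by rw [add_mul]; linarith

lemma G_facts (n k : ℕ) : ∃ G G' : ℝ → ℝ, (∀ r, 0 < r → HasDerivAt G (G' r) r) ∧
    ContinuousOn G' (Set.Ioi 0) ∧ G 1 = 0 ∧
    ∀ (s : ℝ → ℝ) (p t : ℝ), 0 < s p → 0 < s t →
      ∫ x in (0:ℝ)..(s p), phi s n x p * (phi s k x t - phi s k x p) = G (s p / s t) := by
  set a : ℝ := Real.pi * (n + 1/2) with ha
  set c : ℝ := Real.pi * (k + 1/2) with hc
  set A : ℝ → ℝ := fun r => ∫ y in (0:ℝ)..1, Real.cos (a * y) * Real.cos (c * r * y) with hA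
  set A' : ℝ → ℝ := fun r => ∫ y in (0:ℝ)..1, Real.cos (a * y) * (-Real.sin (c * r * y) * (c * y))
    with hA'
  have hdA : ∀ r, HasDerivAt A (A' r) r := by
    intro r
    refine (intervalIntegral.hasDerivAt_integral_of_dominated_loc_of_deriv_le
      (F := fun r y => Real.cos (a * y) * Real.cos (c * r * y))
      (F' := fun r y => Real.cos (a * y) * (-Real.sin (c * r * y) * (c * y)))
      (bound := fun y => |c * y|) (s := Set.univ) Filter.univ_mem ?_ ?_ ?_ ?_ ?_ ?_).2
    · refine Filter.Eventually.of_forall fun x => ?_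
      exact Continuous.aestronglyMeasurable (by fun_prop)
    · exact Continuous.intervalIntegrable (by fun_prop) _ _
    · exact Continuous.aestronglyMeasurable (by fun_prop)
    · refine Filter.Eventually.of_forall fun y _ x _ => ?_
      rw [norm_mul, norm_mul, norm_neg, Real.norm_eq_abs, Real.norm_eq_abs, Real.norm_eq_abs]
      have h1 := Real.abs_cos_le_one (a * y)
      have h2 := Real.abs_sin_le_one (c * x * y)
      have h3 := abs_nonneg (c * y)
      have h4 := abs_nonneg (Real.sin (c * x * y))
      calc _ ≤ 1 * (1 * |c * y|) := by gcongr
        _ = _ := by ring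
    · exact Continuous.intervalIntegrable (by fun_prop) _ _
    · refine Filter.Eventually.of_forall fun y _ x _ => ?_
      have h1 : HasDerivAt (fun x : ℝ => c * x * y) (c * y) x := by
        simpa using ((hasDerivAt_id x).const_mul c).mul_const y
      exact h1.cos.const_mul _
  have hcA' : Continuous A' := by
    apply intervalIntegral.continuous_parametric_intervalIntegral_of_continuous'
    fun_prop
  have hcA : Continuous A := by
    apply intervalIntegral.continuous_parametric_intervalIntegral_of_continuous'
    fun_prop
  refine ⟨fun r => 2 * (√r * A r - A 1), fun r => 2 * (1 / (2 * √r) * A r + √r * A' r), ?_, ?_, ?_, ?_⟩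
  · intro r hr
    exact (((Real.hasDerivAt_sqrt hr.ne').mul (hdA r)).sub_const _).const_mul 2
  · have : ∀ r ∈ Set.Ioi (0:ℝ), 2 * √r ≠ 0 := fun r hr => by
      have : 0 < √r := Real.sqrt_pos.2 hr
      positivity
    have h1 : ContinuousOn (fun r : ℝ => 1 / (2 * √r)) (Set.Ioi 0) :=
      continuousOn_const.div (by fun_prop) this
    exact continuousOn_const.mul ((h1.mul hcA.continuousOn).add
      (Real.continuous_sqrt.continuousOn.mul hcA'.continuousOn))
  · simp
  · intro s p t hp ht
    have hsub := intervalIntegral.mul_integral_comp_mul_right (a := 0) (b := 1)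
      (f := fun x => phi s n x p * (phi s k x t - phi s k x p)) (s p)
    rw [zero_mul, one_mul] at hsub
    rw [← hsub, ← intervalIntegral.integral_const_mul]
    simp only [hA]
    rw [← intervalIntegral.integral_const_mul, ← intervalIntegral.integral_sub,
      ← intervalIntegral.integral_const_mul]
    · apply intervalIntegral.integral_congr
      intro y _
      simp only [phi, lam]
      have e1 : Real.pi / s p * (n + 1/2) * (y * s p) = a * y := by
        rw [ha]; field_simp
      have e2 : Real.pi / s p * (k + 1/2) * (y * s p) = c * 1 * y := by
        rw [hc]; field_simp
      have e3 : Real.pi / s t * (k + 1/2) * (y * s p) = c * (s p / s t) * y := by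
        rw [hc]; field_simp
      rw [e1, e2, e3]
      have f1 : s p * (√(2 / s p) * √(2 / s p)) = 2 := by
        rw [Real.mul_self_sqrt (by positivity)]; field_simp
      have f2 : s p * (√(2 / s p) * √(2 / s t)) = 2 * √(s p / s t) := by
        have : √(2 / s t) = √(2 / s p) * √(s p / s t) := by
          rw [← Real.sqrt_mul (by positivity)]
          congr 1
          field_simp
        rw [this]
        linear_combination √(s p / s t) * f1
      linear_combination (Real.cos (a * y) * Real.cos (c * (s p / s t) * y)) * f2
        - Real.cos (a * y) * Real.cos (c * 1 * y) * f1
    · exact Continuous.intervalIntegrable (by fun_prop) _ _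
    · exact Continuous.intervalIntegrable (by fun_prop) _ _

lemma kern (α T b : ℝ) (hα : α ∈ Set.Ioo (0:ℝ) 1) (hT : 0 < T) (hb : 0 < b)
    (s s' : ℝ → ℝ)
    (hs'int : IntegrableOn s' (Set.Icc 0 T))
    (hsAC : ∀ t ∈ Set.Icc (0:ℝ) T, s t = b + ∫ τ in (0:ℝ)..t, s' τ)
    (hs'pos : ∀ t ∈ Set.Icc (0:ℝ) T, 0 ≤ s' t)
    (hs'cont : ContinuousOn (fun t : ℝ => t ^ (1 - α) * s' t) (Set.Icc 0 T))
    (G G' : ℝ → ℝ) (hG : ∀ r, 0 < r → HasDerivAt G (G' r) r)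
    (hG' : ContinuousOn G' (Set.Ioi 0)) (hG1 : G 1 = 0)
    (u : ℝ → ℝ) (M : ℝ) (hM : 0 ≤ M)
    (hu : AEStronglyMeasurable u (volume.restrict (Set.Ioo 0 T)))
    (hub : ∀ᵐ p ∂(volume.restrict (Set.Ioo 0 T)), |u p| ≤ M * p ^ (α - 1)) :
    ∃ d : ℝ → ℝ, IntegrableOn d (Set.Icc 0 T) ∧ ∀ τ ∈ Set.Icc (0:ℝ) T,
      IntervalIntegrable (fun p => ((τ - p) ^ (-α) * G (s p / s τ)) * u p) volume 0 τ ∧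
      ∫ p in (0:ℝ)..τ, ((τ - p) ^ (-α) * G (s p / s τ)) * u p = ∫ q in (0:ℝ)..τ, d q := by
  obtain ⟨hsc, hs'c, hsd, hsb, hmono, N, hN0, hN1, hN2⟩ :=
    s_facts α T b hα hT hb s s' hs'int hsAC hs'pos hs'cont
  obtain ⟨hα0, hα1⟩ := hα
  have hTm : T ∈ Set.Icc 0 T := ⟨hT.le, le_rfl⟩
  have hST : 0 < s T := hb.trans_le (hsb T hTm)
  have hspos : ∀ t, 0 ≤ t → t ≤ T → 0 < s t := fun t h1 h2 => hb.trans_le (hsb t ⟨h1, h2⟩)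
  have hr : ∀ p q, 0 ≤ p → p ≤ q → q ≤ T → s p / s q ∈ Set.Icc (b / s T) 1 := by
    intro p q hp hpq hq
    have hq0 := hspos q (hp.trans hpq) hq
    constructor
    · apply div_le_div₀ (hspos p hp (hpq.trans hq)).le (hsb p ⟨hp, hpq.trans hq⟩) hq0
      exact hmono q T (hp.trans hpq) hq le_rfl
    · rw [div_le_one hq0]
      exact hmono p q hp hpq hq
  have hbS : 0 < b / s T := by positivity
  obtain ⟨L, hL⟩ := isCompact_Icc.exists_bound_of_continuousOn
    (hG'.mono (fun r (hr : r ∈ Set.Icc (b / s T) 1) => hbS.trans_le hr.1))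
  have h1m : (1:ℝ) ∈ Set.Icc (b / s T) 1 := ⟨by
    rw [div_le_one hST]; exact hsb T hTm, le_rfl⟩
  have hL0 : 0 ≤ L := (norm_nonneg _).trans (hL 1 h1m)
  have hGL : ∀ r ∈ Set.Icc (b / s T) 1, |G r| ≤ L * (1 - r) := by
    intro r hrm
    have := Convex.norm_image_sub_le_of_norm_hasDerivWithin_le
      (fun x hx => (hG x (hbS.trans_le hx.1)).hasDerivWithinAt) hL (convex_Icc _ _) h1m hrm
    rw [hG1, sub_zero, Real.norm_eq_abs, Real.norm_eq_abs, abs_sub_comm,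
      abs_of_nonneg (by linarith [hrm.2] : 0 ≤ 1 - r)] at this
    exact this
  set γ := α * (1 - α) with hγ
  have hγ0 : 0 < γ := mul_pos hα0 (by linarith)
  have hβ : 1 - (1-α)^2 = γ + α := by rw [hγ]; ring
  have hβ' : -(1-α)^2 = γ + α - 1 := by rw [hγ]; ring
  rw [hβ] at hN2
  rw [hβ'] at hN1
  have hGB : ∀ p q, 0 < p → p < q → q ≤ T →
      |G (s p / s q)| ≤ L * N / b * ((q - p) ^ (γ + α) * p ^ (-γ)) := by
    intro p q hp hpq hq
    have hq0 := hspos q (hp.trans hpq).le hq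
    refine (hGL _ (hr p q hp.le hpq.le hq)).trans ?_
    have h1 : 1 - s p / s q ≤ (s q - s p) / b := by
      rw [one_sub_div hq0.ne']
      exact div_le_div_of_nonneg_left (by linarith [hmono p q hp.le hpq.le hq]) hb
        (hsb q ⟨(hp.trans hpq).le, hq⟩)
    calc L * (1 - s p / s q) ≤ L * ((s q - s p) / b) := by gcongr
      _ ≤ L * ((N * ((q - p) ^ (γ + α) * p ^ (-γ))) / b) := by
        gcongr
        exact hN2 p q hp hpq hq
      _ = _ := by ring
  set k : ℝ → ℝ → ℝ := fun p q => -α * (q - p) ^ (-α - 1) * G (s p / s q) +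
    (q - p) ^ (-α) * (G' (s p / s q) * (-(s p * s' q) / (s q)^2)) with hk
  have hbd : ∀ p q, 0 < p → p < q → q ≤ T →
      |k p q| ≤ (α * (L * N / b) + L * N / b) * ((q - p) ^ (γ - 1) * p ^ (-γ)) := by
    intro p q hp hpq hq
    have hd : 0 < q - p := by linarith
    have hq0 := hspos q (hp.trans hpq).le hq
    have hp0 := hspos p hp.le (hpq.le.trans hq)
    have hs'0 := hs'pos q ⟨(hp.trans hpq).le, hq⟩
    have t1 : |-α * (q - p) ^ (-α - 1) * G (s p / s q)| ≤
        α * (L * N / b) * ((q - p) ^ (γ - 1) * p ^ (-γ)) := by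
      rw [abs_mul, abs_mul, abs_neg, abs_of_pos hα0, abs_of_nonneg (Real.rpow_nonneg hd.le _)]
      have e : (q - p) ^ (γ - 1) = (q - p) ^ (-α - 1) * (q - p) ^ (γ + α) := by
        rw [← Real.rpow_add hd]; congr 1; ring
      rw [e]
      have := hGB p q hp hpq hq
      have h2 : 0 ≤ α * (q - p) ^ (-α - 1) := mul_nonneg hα0.le (Real.rpow_nonneg hd.le _)
      calc _ ≤ α * (q - p) ^ (-α - 1) * (L * N / b * ((q - p) ^ (γ + α) * p ^ (-γ))) := by gcongr
        _ = _ := by ring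
    have t2 : |(q - p) ^ (-α) * (G' (s p / s q) * (-(s p * s' q) / (s q)^2))| ≤
        L * N / b * ((q - p) ^ (γ - 1) * p ^ (-γ)) := by
      have e : (q - p) ^ (γ - 1) = (q - p) ^ (-α) * (q - p) ^ (γ + α - 1) := by
        rw [← Real.rpow_add hd]; congr 1; ring
      have h3 : |-(s p * s' q) / (s q)^2| ≤ s' q / b := by
        rw [abs_div, abs_neg, abs_of_nonneg (mul_nonneg hp0.le hs'0), abs_of_pos (by positivity),
          div_le_div_iff₀ (by positivity) hb]
        have h4 := hmono p q hp.le hpq.le hq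
        have h5 := hsb q ⟨(hp.trans hpq).le, hq⟩
        have h6 : s p * b ≤ s q * s q := mul_le_mul h4 h5 hb.le hq0.le
        nlinarith
      have h4 := hL _ (hr p q hp.le hpq.le hq)
      rw [Real.norm_eq_abs] at h4
      rw [abs_mul, abs_mul, abs_of_nonneg (Real.rpow_nonneg hd.le _), e]
      have h6 := hN1 p q hp hpq hq
      have h7 := Real.rpow_nonneg hd.le (-α)
      calc _ ≤ (q - p) ^ (-α) * (L * (s' q / b)) := by gcongr
        _ ≤ (q - p) ^ (-α) * (L * ((N * ((q - p) ^ (γ + α - 1) * p ^ (-γ))) / b)) := by gcongr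
        _ = _ := by ring
    calc |k p q| ≤ _ + _ := abs_add_le _ _
      _ ≤ _ := add_le_add t1 t2
      _ = _ := by ring
  have hkc : ContinuousOn (fun z : ℝ × ℝ => k z.1 z.2) {z | 0 < z.1 ∧ z.1 < z.2 ∧ z.2 ≤ T} := by
    set U : Set (ℝ × ℝ) := {z | 0 < z.1 ∧ z.1 < z.2 ∧ z.2 ≤ T} with hU
    have c1 : ContinuousOn (fun z : ℝ × ℝ => s z.1) U :=
      hsc.comp continuousOn_fst (fun z hz => ⟨hz.1.le, hz.2.1.le.trans hz.2.2⟩)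
    have c2 : ContinuousOn (fun z : ℝ × ℝ => s z.2) U :=
      hsc.comp continuousOn_snd (fun z hz => ⟨(hz.1.trans hz.2.1).le, hz.2.2⟩)
    have c3 : ContinuousOn (fun z : ℝ × ℝ => s' z.2) U :=
      hs'c.comp continuousOn_snd (fun z hz => ⟨(hz.1.trans hz.2.1), hz.2.2⟩)
    have hne : ∀ z ∈ U, s z.2 ≠ 0 := fun z hz => (hspos z.2 (hz.1.trans hz.2.1).le hz.2.2).ne'
    have c4 : ContinuousOn (fun z : ℝ × ℝ => s z.1 / s z.2) U := c1.div c2 hne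
    have hm : Set.MapsTo (fun z : ℝ × ℝ => s z.1 / s z.2) U (Set.Ioi 0) := fun z hz =>
      hbS.trans_le (hr z.1 z.2 hz.1.le hz.2.1.le hz.2.2).1
    have c5 : ContinuousOn (fun z : ℝ × ℝ => G (s z.1 / s z.2)) U :=
      (show ContinuousOn G (Set.Ioi 0) from
        fun r hr => (hG r hr).continuousAt.continuousWithinAt).comp c4 hm
    have c6 : ContinuousOn (fun z : ℝ × ℝ => G' (s z.1 / s z.2)) U := hG'.comp c4 hm
    have c7 : ∀ e : ℝ, ContinuousOn (fun z : ℝ × ℝ => (z.2 - z.1) ^ e) U := fun e =>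
      (continuousOn_snd.sub continuousOn_fst).rpow_const
        (fun z hz => Or.inl (sub_pos.2 hz.2.1).ne')
    exact ((continuousOn_const.mul (c7 _)).mul c5).add ((c7 _).mul (c6.mul
      ((c1.mul c3).neg.div (c2.pow 2) (fun z hz => pow_ne_zero 2 (hne z hz)))))
  refine fub_s9 T hT k (fun p τ => (τ - p) ^ (-α) * G (s p / s τ)) u (γ - 1) (-γ) (α - 1)
    (α * (L * N / b) + L * N / b) M (by linarith) (by rw [hγ]; nlinarith) (by positivity) hM hkc hbd
    hu hub ?_
  intro p τ hp hpτ hτ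
  set F : ℝ → ℝ := fun q => (q - p) ^ (-α) * G (s p / s q) with hF
  have hFp : F p = 0 := by
    simp only [hF]
    rw [sub_self, Real.zero_rpow (by linarith), zero_mul]
  have hder : ∀ q ∈ Set.Ioo p T, HasDerivAt F (k p q) q := by
    intro q hq
    have hd : 0 < q - p := by linarith [hq.1]
    have hq0 := hspos q (hp.trans hq.1).le hq.2.le
    have hp0 := hspos p hp.le (hq.1.trans hq.2).le
    have d1 : HasDerivAt (fun q : ℝ => (q - p) ^ (-α)) (-α * (q - p) ^ (-α - 1)) q := by
      simpa using ((hasDerivAt_id q).sub_const p).rpow_const (p := -α) (Or.inl hd.ne')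
    have d2 : HasDerivAt (fun q => s p / s q) (-(s p * s' q) / (s q)^2) q := by
      have h := (hasDerivAt_const q (s p)).div (hsd q ⟨hp.trans hq.1, hq.2⟩) hq0.ne'
      rw [zero_mul, zero_sub] at h
      exact h
    exact d1.mul ((hG _ (div_pos hp0 hq0)).comp q d2)
  have hFbd : ∀ q ∈ Set.Icc p τ, ‖F q‖ ≤ L * N / b * ((q - p) ^ γ * p ^ (-γ)) := by
    intro q hq
    rcases eq_or_lt_of_le hq.1 with h | h
    · rw [← h, hFp, norm_zero]
      have : 0 ≤ (p - p) ^ γ := Real.rpow_nonneg (by simp) _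
      have h2 : 0 ≤ p ^ (-γ) := Real.rpow_nonneg hp.le _
      positivity
    · have hd : 0 < q - p := by linarith
      have := hGB p q hp h (hq.2.trans hτ)
      rw [Real.norm_eq_abs, hF, abs_mul, abs_of_nonneg (Real.rpow_nonneg hd.le _)]
      have e : (q - p) ^ γ = (q - p) ^ (-α) * (q - p) ^ (γ + α) := by
        rw [← Real.rpow_add hd]; congr 1; ring
      rw [e]
      have h7 := Real.rpow_nonneg hd.le (-α)
      calc _ ≤ (q - p) ^ (-α) * (L * N / b * ((q - p) ^ (γ + α) * p ^ (-γ))) := by gcongr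
        _ = _ := by ring
  have hFc : ContinuousOn F (Set.Icc p τ) := by
    intro q hq
    rcases eq_or_lt_of_le hq.1 with h | h
    · rw [← h]
      unfold ContinuousWithinAt
      rw [hFp]
      refine squeeze_zero_norm' (a := fun q => L * N / b * ((q - p) ^ γ * p ^ (-γ))) ?_ ?_
      · filter_upwards [self_mem_nhdsWithin] with x hx using hFbd x hx
      · have hc : Continuous (fun q : ℝ => L * N / b * ((q - p) ^ γ * p ^ (-γ))) :=
          continuous_const.mul (((continuous_id.sub continuous_const).rpow_const
            (fun _ => Or.inr hγ0.le)).mul continuous_const)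
        have := hc.tendsto p
        simp only [sub_self, Real.zero_rpow hγ0.ne', zero_mul, mul_zero] at this
        exact this.mono_left nhdsWithin_le_nhds
    · have hd : 0 < q - p := by linarith
      have hqT := hq.2.trans hτ
      have hq0 := hspos q (hp.trans h).le hqT
      have hp0 := hspos p hp.le (h.le.trans hqT)
      have c1 : ContinuousWithinAt s (Set.Icc p τ) q :=
        (hsc q ⟨(hp.trans h).le, hqT⟩).mono (Set.Icc_subset_Icc hp.le hτ)
      have c2 : ContinuousWithinAt (fun q => s p / s q) (Set.Icc p τ) q :=
        continuousWithinAt_const.div c1 hq0.ne'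
      have c3 := (hG _ (div_pos hp0 hq0)).continuousAt.comp_continuousWithinAt (f := fun q => s p / s q) c2
      have c4 : ContinuousWithinAt (fun q : ℝ => (q - p) ^ (-α)) (Set.Icc p τ) q :=
        (((continuous_id.sub continuous_const).continuousAt).rpow_const
          (Or.inl hd.ne')).continuousWithinAt
      exact c4.mul c3
  have hki : IntervalIntegrable (k p) volume p τ := by
    have hri : IntervalIntegrable (fun r : ℝ => (r - p) ^ (γ - 1)) volume p τ := by
      have h := (intervalIntegral.intervalIntegrable_rpow' (a := 0) (b := τ - p)
        (r := γ - 1) (by linarith)).comp_sub_right p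
      simpa using h
    have hri2 := (hri.mul_const (p ^ (-γ))).const_mul (α * (L * N / b) + L * N / b)
    rw [intervalIntegrable_iff_integrableOn_Ioc_of_le hpτ.le] at hri2 ⊢
    refine Integrable.mono' hri2 ?_ ?_
    · apply ContinuousOn.aestronglyMeasurable _ measurableSet_Ioc
      exact hkc.comp (f := fun q => (p, q)) (by fun_prop) (fun q hq => ⟨hp, hq.1, hq.2.trans hτ⟩)
    · rw [ae_restrict_iff' measurableSet_Ioc]
      exact Filter.Eventually.of_forall fun q hq => hbd p q hp hq.1 (hq.2.trans hτ)
  have := intervalIntegral.integral_eq_sub_of_hasDerivAt_of_le hpτ.le hFc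
    (fun q hq => hder q ⟨hq.1, hq.2.trans_le hτ⟩) hki
  rw [this, hFp, sub_zero]

/-- If `w` is measurable with `p ↦ p^{1−α} w(p) ∈ L^∞(0,T)`, then
`g₂(τ) = ∫₀^τ (τ−p)^{−α} B(p,τ) w(p) dp` has an absolutely continuous representative
`g̃₂` with `g̃₂(0) = 0`. -/
theorem stmt_9 (α T b : ℝ) (m : ℕ) (hα : α ∈ Set.Ioo (0:ℝ) 1) (hT : 0 < T) (hb : 0 < b)
    (s s' : ℝ → ℝ)
    (hs'int : IntegrableOn s' (Set.Icc 0 T))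
    (hsAC : ∀ t ∈ Set.Icc (0:ℝ) T, s t = b + ∫ τ in (0:ℝ)..t, s' τ)
    (hs'pos : ∀ t ∈ Set.Icc (0:ℝ) T, 0 ≤ s' t)
    (hs'cont : ContinuousOn (fun t : ℝ => t ^ (1 - α) * s' t) (Set.Icc 0 T))
    (w : ℝ → Fin (m + 1) → ℝ) (M : ℝ)
    (hw_meas : AEStronglyMeasurable w (volume.restrict (Set.Ioo 0 T)))
    (hw_bdd : ∀ᵐ p ∂(volume.restrict (Set.Ioo 0 T)), ‖(p ^ (1 - α)) • w p‖ ≤ M) :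
    ∃ g₂ : ℝ → Fin (m + 1) → ℝ,
      (∃ d : ℝ → Fin (m + 1) → ℝ, IntegrableOn d (Set.Icc 0 T) ∧
        ∀ τ ∈ Set.Icc (0:ℝ) T, g₂ τ = g₂ 0 + ∫ p in (0:ℝ)..τ, d p) ∧
      g₂ 0 = 0 ∧
      ∀ᵐ τ ∂(volume.restrict (Set.Ioo 0 T)),
        g₂ τ = ∫ p in (0:ℝ)..τ, ((τ - p) ^ (-α)) • (Bmat s m p τ).mulVec (w p) := by
  have hs := s_facts α T b hα hT hb s s' hs'int hsAC hs'pos hs'cont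
  have hsb := hs.2.2.2.1
  choose G G' hG hG' hG1 hGB using G_facts
  have hk : ∀ n k : Fin (m + 1), _ := fun n k =>
    kern α T b hα hT hb s s' hs'int hsAC hs'pos hs'cont (G n k) (G' n k) (hG n k) (hG' n k)
      (hG1 n k) (fun p => w p k) (max M 0) (le_max_right _ _)
      ((continuous_apply k).comp_aestronglyMeasurable hw_meas) (by
        filter_upwards [hw_bdd, ae_restrict_mem measurableSet_Ioo] with p hp hp0
        have h1 : ‖((p ^ (1 - α)) • w p) k‖ ≤ M := (norm_le_pi_norm _ k).trans hp
        rw [Pi.smul_apply, smul_eq_mul, norm_mul, Real.norm_eq_abs, Real.norm_eq_abs,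
          abs_of_nonneg (Real.rpow_nonneg hp0.1.le _)] at h1
        have h2 : |w p k| = p ^ (α - 1) * (p ^ (1 - α) * |w p k|) := by
          rw [← mul_assoc, ← Real.rpow_add hp0.1]
          simp
        rw [h2, mul_comm (max M 0)]
        exact mul_le_mul_of_nonneg_left (h1.trans (le_max_left _ _)) (Real.rpow_nonneg hp0.1.le _))
  choose d hd hdτ using hk
  have hdi : ∀ n, IntegrableOn (fun q => ∑ k, d n k q) (Set.Icc 0 T) := fun n =>
    integrable_finsetSum _ (fun k _ => hd n k)
  have hdI : IntegrableOn (fun q n => ∑ k, d n k q) (Set.Icc 0 T) := Integrable.of_eval hdi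
  refine ⟨fun τ => ∫ q in (0:ℝ)..τ, (fun n => ∑ k, d n k q), ⟨fun q n => ∑ k, d n k q, hdI, ?_⟩,
    ?_, ?_⟩
  · intro τ _
    simp
  · simp
  · filter_upwards [ae_restrict_mem measurableSet_Ioo] with τ hτ
    have hτ' : τ ∈ Set.Icc 0 T := ⟨hτ.1.le, hτ.2.le⟩
    have hsubset : Set.Ioc 0 τ ⊆ Set.Icc 0 T := fun x hx => ⟨hx.1.le, hx.2.trans hτ'.2⟩
    have heq : ∀ n, ∀ p ∈ Set.Ioc 0 τ,
        (((τ - p) ^ (-α)) • (Bmat s m p τ).mulVec (w p)) n =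
        ∑ k : Fin (m + 1), ((τ - p) ^ (-α) * G n k (s p / s τ)) * w p k := by
      intro n p hp
      rw [Pi.smul_apply, smul_eq_mul, Matrix.mulVec, dotProduct, Finset.mul_sum]
      refine Finset.sum_congr rfl fun k _ => ?_
      rw [Bmat, Matrix.of_apply, hGB n k s p τ (hb.trans_le (hsb p (hsubset hp)))
        (hb.trans_le (hsb τ hτ'))]
      ring
    have hi : ∀ (n k : Fin (m+1)), IntegrableOn
        (fun p => ((τ - p) ^ (-α) * G n k (s p / s τ)) * w p k) (Set.Ioc 0 τ) := fun n k => by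
      have := (hdτ n k τ hτ').1
      rwa [intervalIntegrable_iff_integrableOn_Ioc_of_le hτ.1.le] at this
    rw [intervalIntegral.integral_of_le hτ.1.le, intervalIntegral.integral_of_le hτ.1.le]
    funext n
    rw [eval_integral (fun n => (hdi n).mono_set hsubset), eval_integral]
    · rw [setIntegral_congr_fun measurableSet_Ioc (heq n), integral_finsetSum,
        integral_finsetSum]
      · refine Finset.sum_congr rfl fun k _ => ?_
        have := (hdτ n k τ hτ').2
        rw [intervalIntegral.integral_of_le hτ.1.le, intervalIntegral.integral_of_le hτ.1.le] at this
        exact this.symm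
      · exact fun k _ => hi n k
      · exact fun k _ => (hd n k).mono_set hsubset
    · intro n
      refine (integrable_finsetSum (f := fun (k : Fin (m+1)) p => ((τ - p) ^ (-α) * G n k (s p / s τ)) * w p k) Finset.univ (fun k _ => hi n k)).congr ?_
      filter_upwards [ae_restrict_mem measurableSet_Ioc] with p hp
      exact (heq n p hp).symm
end

section
/- Let α ∈ (0,1), T > 0, b > 0, and let s : [0,T] → ℝ be absolutely continuous with s(0) = b, ṡ ≥ 0, and t ↦ t^{1−α} ṡ(t) continuous on [0,T]. Then there exists a constant c₀ = c₀(α) such that: (i) lim_{t₂ → t₁⁺} Q_{1,1}(t₁,t₂) = 0 for every t₁ ≥ 0; (ii) |Q_{1,1}(0,t)| ≤ c₀ [s(t) − s(0)] for all t ∈ (0,T]; (iii) |Q_{1,2}(t₁,t₂)| ≤ c₀ |t₂ − t₁|^α for all 0 ≤ t₁ < t₂ ≤ T. -/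
open MeasureTheory Set Filter
open scoped Topology

/-- `Q_{1,1}(t₁,t₂) = t₂^{1−α} ∫_{t₁}^{t₂} (t₂−τ)^{α−1}
∫₀^τ (τ−p)^{−α−1}[s(τ)−s(p)] p^{α−1} dp dτ`. -/
noncomputable def Q11 (α : ℝ) (s : ℝ → ℝ) (t₁ t₂ : ℝ) : ℝ :=
  t₂ ^ (1 - α) * ∫ τ in t₁..t₂, (t₂ - τ) ^ (α - 1) *
    ∫ p in (0:ℝ)..τ, (τ - p) ^ (-α - 1) * (s τ - s p) * p ^ (α - 1)

/-- `Q_{1,2}(t₁,t₂) = t₂^{1−α} ∫_{t₁}^{t₂} (t₂−τ)^{α−1} τ^{α−1}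
∫₀^τ (τ−p)^{−α} p^{α−1} dp dτ`. -/
noncomputable def Q12 (α : ℝ) (t₁ t₂ : ℝ) : ℝ :=
  t₂ ^ (1 - α) * ∫ τ in t₁..t₂, (t₂ - τ) ^ (α - 1) * τ ^ (α - 1) *
    ∫ p in (0:ℝ)..τ, (τ - p) ^ (-α) * p ^ (α - 1)

lemma ftc_l {F f : ℝ → ℝ} {a b : ℝ} (hab : a ≤ b) (hc : ContinuousOn F (Icc a b))
    (hd : ∀ x ∈ Ioo a b, HasDerivAt F (f x) x) (hp : ∀ x ∈ Ioo a b, 0 ≤ f x) :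
    ∫⁻ x in Ioo a b, ENNReal.ofReal (f x) = ENNReal.ofReal (F b - F a) := by
  have hi : IntegrableOn f (Ioc a b) :=
    intervalIntegral.integrableOn_deriv_of_nonneg hc hd hp
  have hI := intervalIntegral.integral_eq_sub_of_hasDerivAt_of_le hab hc hd
    ((intervalIntegrable_iff_integrableOn_Ioc_of_le hab).2 hi)
  rw [← hI, intervalIntegral.integral_of_le hab, integral_Ioc_eq_integral_Ioo,
    ofReal_integral_eq_lintegral_ofReal]
  · exact hi.mono_set Ioo_subset_Ioc_self
  · exact (ae_restrict_iff' measurableSet_Ioo).2 (ae_of_all _ hp)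

lemma tri {K : ℝ → ℝ → ENNReal} (hK : Measurable (Function.uncurry K)) (a b : ℝ) :
    ∫⁻ p in Ioo a b, ∫⁻ x in Ioo p b, K p x = ∫⁻ x in Ioo a b, ∫⁻ p in Ioo a x, K p x := by
  have e1 : ∀ p, (Ioo a b).indicator (fun p => ∫⁻ x in Ioo p b, K p x) p =
      ∫⁻ x, {q : ℝ × ℝ | a < q.1 ∧ q.1 < q.2 ∧ q.2 < b}.indicator (Function.uncurry K) (p, x) := by
    intro p
    by_cases hp : p ∈ Ioo a b
    · rw [indicator_of_mem hp, ← lintegral_indicator measurableSet_Ioo]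
      congr 1; ext x
      simp only [indicator, mem_Ioo, mem_ofPred_eq, Function.uncurry]
      simp [hp.1]
    · rw [indicator_of_notMem hp]
      symm
      rw [lintegral_eq_zero_iff']
      · refine ae_of_all _ fun x => ?_
        apply indicator_of_notMem
        rintro ⟨h1, h2, h3⟩
        exact hp ⟨h1, h2.trans h3⟩
      · refine (Measurable.indicator hK ?_).comp measurable_prodMk_left |>.aemeasurable
        measurability
  have e2 : ∀ x, (Ioo a b).indicator (fun x => ∫⁻ p in Ioo a x, K p x) x =
      ∫⁻ p, {q : ℝ × ℝ | a < q.1 ∧ q.1 < q.2 ∧ q.2 < b}.indicator (Function.uncurry K) (p, x) := by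
    intro p
    by_cases hp : p ∈ Ioo a b
    · rw [indicator_of_mem hp, ← lintegral_indicator measurableSet_Ioo]
      congr 1; ext x
      simp only [indicator, mem_Ioo, mem_ofPred_eq, Function.uncurry]
      simp [hp.2]
    · rw [indicator_of_notMem hp]
      symm
      rw [lintegral_eq_zero_iff']
      · refine ae_of_all _ fun x => ?_
        apply indicator_of_notMem
        rintro ⟨h1, h2, h3⟩
        exact hp ⟨h1.trans h2, h3⟩
      · refine (Measurable.indicator hK ?_).comp measurable_prodMk_right |>.aemeasurable
        measurability
  rw [← lintegral_indicator measurableSet_Ioo, ← lintegral_indicator measurableSet_Ioo]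
  simp_rw [e1, e2]
  apply lintegral_lintegral_swap
  apply Measurable.aemeasurable
  apply Measurable.indicator hK
  measurability

lemma split_le {α u v : ℝ} (h0 : 0 < α) (h1 : α < 1) (hu : 0 < u) (hv : 0 < v) (h : u + v = 1) :
    u ^ (-α) * v ^ (α - 1) ≤ u ^ (-α) + v ^ (α - 1) := by
  have a1 : v * v ^ (α - 1) ≤ 1 := by
    rw [mul_comm, ← Real.rpow_add_one hv.ne']
    apply Real.rpow_le_one hv.le <;> linarith
  have a2 : u * u ^ (-α) ≤ 1 := by
    rw [mul_comm, ← Real.rpow_add_one hu.ne']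
    apply Real.rpow_le_one hu.le <;> linarith
  have p1 : 0 < v ^ (α - 1) := by positivity
  have p2 : 0 < u ^ (-α) := by positivity
  calc u ^ (-α) * v ^ (α - 1) = (u + v) * (u ^ (-α) * v ^ (α - 1)) := by rw [h, one_mul]
    _ = (u * u ^ (-α)) * v ^ (α - 1) + u ^ (-α) * (v * v ^ (α - 1)) := by ring
    _ ≤ 1 * v ^ (α - 1) + u ^ (-α) * 1 := by gcongr
    _ = _ := by ring

/-- general beta bound through a monotone change of variables -/
lemma beta_gen {α a b : ℝ} (h0 : 0 < α) (h1 : α < 1) (hab : a ≤ b) {u u' : ℝ → ℝ}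
    (hc : ContinuousOn u (Icc a b)) (hd : ∀ x ∈ Ioo a b, HasDerivAt u (u' x) x)
    (hp : ∀ x ∈ Ioo a b, 0 ≤ u' x) (hu : ∀ x ∈ Ioo a b, u x ∈ Ioo (0:ℝ) 1)
    (ha : u a = 0) (hb : u b = 1) :
    ∫⁻ x in Ioo a b, ENNReal.ofReal ((u x) ^ (-α) * (1 - u x) ^ (α - 1) * u' x) ≤
      ENNReal.ofReal (1 / α + 1 / (1 - α)) := by
  have key := ftc_l (F := fun x => (u x) ^ (1 - α) / (1 - α) - (1 - u x) ^ α / α)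
    (f := fun x => ((u x) ^ (-α) + (1 - u x) ^ (α - 1)) * u' x) hab ?_ ?_ ?_
  · refine (setLIntegral_mono' measurableSet_Ioo fun x hx => ?_).trans (key.trans ?_).le
    · apply ENNReal.ofReal_le_ofReal
      obtain ⟨h2, h3⟩ := hu x hx
      exact mul_le_mul_of_nonneg_right (split_le h0 h1 h2 (by linarith) (by ring)) (hp x hx)
    · have n1 : 1 - α ≠ 0 := by linarith
      simp [ha, hb, Real.zero_rpow n1, Real.zero_rpow h0.ne', add_comm]
  · refine ContinuousOn.sub ?_ ?_
    · exact (hc.rpow_const fun x _ => Or.inr (by linarith)).div_const _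
    · exact ((continuousOn_const.sub hc).rpow_const fun x _ => Or.inr (by linarith)).div_const _
  · intro x hx
    obtain ⟨h2, h3⟩ := hu x hx
    have n1 : 1 - α ≠ 0 := by linarith
    have n2 : 1 - u x ≠ 0 := by linarith
    have d1 := ((hd x hx).rpow_const (p := 1 - α) (Or.inl h2.ne')).div_const (1 - α)
    have d2 := (((hd x hx).const_sub 1).rpow_const (p := α) (Or.inl n2)).div_const α
    refine (d1.sub d2).congr_deriv ?_
    rw [show 1 - α - 1 = -α by ring]
    field_simp
    ring
  · intro x hx
    obtain ⟨h2, h3⟩ := hu x hx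
    have := hp x hx
    have n2 : 0 < 1 - u x := by linarith
    positivity

lemma beta1 {α x t : ℝ} (h0 : 0 < α) (h1 : α < 1) (hx : 0 < x) (hxt : x < t) :
    ∫⁻ τ in Ioo x t, ENNReal.ofReal (t ^ (1 - α) * x ^ α * ((t - τ) ^ (α - 1) * τ⁻¹ * (τ - x) ^ (-α)))
      ≤ ENNReal.ofReal (1 / α + 1 / (1 - α)) := by
  have ht := hx.trans hxt
  have hd : 0 < t - x := by linarith
  have key := beta_gen h0 h1 hxt.le (u := fun τ => t * (τ - x) / (τ * (t - x)))
    (u' := fun τ => t * x / (τ ^ 2 * (t - x))) ?_ ?_ ?_ ?_ ?_ ?_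
  · refine le_trans (setLIntegral_mono' measurableSet_Ioo fun τ hτ => ?_) key
    apply ENNReal.ofReal_le_ofReal
    apply le_of_eq
    have p1 : 0 < τ := hx.trans hτ.1
    have p2 : 0 < τ - x := by linarith [hτ.1]
    have p3 : 0 < t - τ := by linarith [hτ.2]
    have e : 1 - t * (τ - x) / (τ * (t - x)) = x * (t - τ) / (τ * (t - x)) := by
      field_simp; ring
    rw [e, Real.div_rpow (by positivity) (by positivity), Real.div_rpow (by positivity) (by positivity),
      Real.mul_rpow ht.le p2.le, Real.mul_rpow hx.le p3.le]
    have e2 : (τ * (t - x)) ^ (-α) * (τ * (t - x)) ^ (α - 1) = (τ * (t - x))⁻¹ := by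
      rw [← Real.rpow_add (by positivity), ← Real.rpow_neg_one]; congr 1; ring
    have e3 : t ^ (1 - α) = t ^ (-α) * t := by
      rw [← Real.rpow_add_one ht.ne']; congr 1; ring
    have e4 : x ^ α = x ^ (α - 1) * x := by
      rw [← Real.rpow_add_one hx.ne']; congr 1; ring
    rw [e3, e4]
    have : t ^ (-α) * (τ - x) ^ (-α) / (τ * (t - x)) ^ (-α) *
        (x ^ (α - 1) * (t - τ) ^ (α - 1) / (τ * (t - x)) ^ (α - 1)) * (t * x / (τ ^ 2 * (t - x)))
        = t ^ (-α) * (τ - x) ^ (-α) * x ^ (α - 1) * (t - τ) ^ (α - 1) *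
         ((τ * (t - x)) ^ (-α) * (τ * (t - x)) ^ (α - 1))⁻¹ * (t * x / (τ ^ 2 * (t - x))) := by
      rw [mul_inv]; ring
    rw [this, e2]
    field_simp
  · apply ContinuousOn.div (by fun_prop) (by fun_prop)
    intro y hy
    have : 0 < y := hx.trans_le hy.1
    positivity
  · intro y hy
    have : 0 < y := hx.trans hy.1
    have d := (((hasDerivAt_id y).sub_const x).const_mul t).div ((hasDerivAt_id y).mul_const (t - x))
      (by simp; constructor <;> linarith)
    refine d.congr_deriv ?_
    simp only [id]
    field_simp
    ring
  · intro y hy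
    have : 0 < y := hx.trans hy.1
    positivity
  · intro y hy
    have : 0 < y := hx.trans hy.1
    have p2 : 0 < y - x := by linarith [hy.1]
    refine ⟨by positivity, ?_⟩
    rw [div_lt_one (by positivity)]
    nlinarith [hy.2]
  · simp
  · field_simp

lemma beta2 {α τ : ℝ} (h0 : 0 < α) (h1 : α < 1) (hτ : 0 < τ) :
    ∫⁻ p in Ioo 0 τ, ENNReal.ofReal ((τ - p) ^ (-α) * p ^ (α - 1))
      ≤ ENNReal.ofReal (1 / α + 1 / (1 - α)) := by
  have key := beta_gen (α := 1 - α) (by linarith) (by linarith) hτ.le (u := fun p => p / τ)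
    (u' := fun p => 1 / τ) (by fun_prop) (fun x _ => (hasDerivAt_id x).div_const τ)
      (fun x _ => by positivity) (fun x hx => ⟨div_pos hx.1 hτ, (div_lt_one hτ).2 hx.2⟩)
      (by simp) (by field_simp)
  rw [show 1 / (1 - α) + 1 / (1 - (1 - α)) = 1 / α + 1 / (1 - α) by ring] at key
  refine le_trans (setLIntegral_mono' measurableSet_Ioo fun p hp => ?_) key
  apply ENNReal.ofReal_le_ofReal
  apply le_of_eq
  have p3 : 0 < τ - p := by linarith [hp.2]
  rw [show 1 - p / τ = (τ - p) / τ by field_simp, Real.div_rpow hp.1.le hτ.le,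
    Real.div_rpow p3.le hτ.le]
  have e2 : τ ^ (-(1 - α)) * τ ^ (1 - α - 1) = τ⁻¹ := by
    rw [← Real.rpow_add (by positivity), ← Real.rpow_neg_one]; congr 1; ring
  have : p ^ (-(1 - α)) / τ ^ (-(1 - α)) * ((τ - p) ^ (1 - α - 1) / τ ^ (1 - α - 1)) * (1 / τ) =
     p ^ (-(1 - α)) * (τ - p) ^ (1 - α - 1) * (τ ^ (-(1 - α)) * τ ^ (1 - α - 1))⁻¹ * τ⁻¹ := by
    rw [mul_inv]; ring
  rw [this, e2, show -(1 - α) = α - 1 by ring, show 1 - α - 1 = -α by ring]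
  field_simp

lemma kerD {α t₁ t₂ : ℝ} (h0 : 0 < α) (h1 : α < 1) (ht : 0 ≤ t₁) (h : t₁ < t₂) :
    ∫⁻ τ in Ioo t₁ t₂, ENNReal.ofReal (t₂ ^ (1 - α) * ((t₂ - τ) ^ (α - 1) * τ ^ (α - 1)))
      ≤ ENNReal.ofReal (2 / α * (t₂ - t₁) ^ α) := by
  have p2 : 0 < t₂ := by linarith
  have key := ftc_l (a := t₁) (b := t₂)
    (F := fun τ => t₂ ^ (-α) * ((t₂ - t₁) ^ α * τ ^ α / α - t₂ ^ α * (t₂ - τ) ^ α / α))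
    (f := fun τ => t₂ ^ (-α) * ((t₂ - t₁) ^ α * τ ^ (α - 1) + t₂ ^ α * (t₂ - τ) ^ (α - 1))) h.le
    ?_ ?_ ?_
  · refine (setLIntegral_mono' measurableSet_Ioo fun τ hτ => ?_).trans (key.le.trans ?_)
    · apply ENNReal.ofReal_le_ofReal
      have p1 : 0 < τ := ht.trans_lt hτ.1
      have p3 : 0 < t₂ - τ := by linarith [hτ.2]
      have p4 : 0 < t₂ - t₁ := by linarith
      have e3 : t₂ ^ (1 - α) = t₂ ^ (-α) * t₂ := by
        rw [← Real.rpow_add_one p2.ne']; congr 1; ring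
      have b1 : (t₂ - τ) ^ (α - 1) * (t₂ - τ) ≤ (t₂ - t₁) ^ α := by
        rw [← Real.rpow_add_one p3.ne', sub_add_cancel]
        apply Real.rpow_le_rpow p3.le (by linarith [hτ.1]) h0.le
      have b2 : τ ^ (α - 1) * τ ≤ t₂ ^ α := by
        rw [← Real.rpow_add_one p1.ne', sub_add_cancel]
        apply Real.rpow_le_rpow p1.le (by linarith [hτ.2]) h0.le
      rw [e3, mul_assoc]
      apply mul_le_mul_of_nonneg_left _ (by positivity)
      calc t₂ * ((t₂ - τ) ^ (α - 1) * τ ^ (α - 1)) =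
        ((t₂ - τ) ^ (α - 1) * (t₂ - τ)) * τ ^ (α - 1) + (τ ^ (α - 1) * τ) * (t₂ - τ) ^ (α - 1) := by
            ring
        _ ≤ _ := by gcongr
    · apply ENNReal.ofReal_le_ofReal
      have p4 : 0 < t₂ - t₁ := by linarith
      have e : t₂ ^ (-α) * t₂ ^ α = 1 := by rw [← Real.rpow_add p2]; simp
      simp only [sub_self, Real.zero_rpow h0.ne', mul_zero, zero_div, sub_zero]
      have hn : 0 ≤ t₂ ^ (-α) * ((t₂ - t₁) ^ α * t₁ ^ α / α) := by positivity
      have : t₂ ^ (-α) * ((t₂ - t₁) ^ α * t₂ ^ α / α) -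
        t₂ ^ (-α) * ((t₂ - t₁) ^ α * t₁ ^ α / α - t₂ ^ α * (t₂ - t₁) ^ α / α) =
        2 / α * (t₂ - t₁) ^ α * (t₂ ^ (-α) * t₂ ^ α) - t₂ ^ (-α) * ((t₂ - t₁) ^ α * t₁ ^ α / α) := by ring
      rw [this, e]; linarith
  · have c1 : ContinuousOn (fun τ : ℝ => τ ^ α) (Icc t₁ t₂) :=
      (Real.continuous_rpow_const h0.le).continuousOn
    have c2 : ContinuousOn (fun τ : ℝ => (t₂ - τ) ^ α) (Icc t₁ t₂) :=
      ((Real.continuous_rpow_const h0.le).comp (continuous_const.sub continuous_id)).continuousOn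
    fun_prop
  · intro τ hτ
    have p1 : 0 < τ := ht.trans_lt hτ.1
    have p3 : t₂ - τ ≠ 0 := by linarith [hτ.2]
    have d1 := (((hasDerivAt_id τ).rpow_const (p := α) (Or.inl p1.ne')).const_mul
      ((t₂ - t₁) ^ α)).div_const α
    have d2 := ((((hasDerivAt_id τ).const_sub t₂).rpow_const (p := α) (Or.inl p3)).const_mul
      (t₂ ^ α)).div_const α
    refine ((d1.sub d2).const_mul (t₂ ^ (-α))).congr_deriv ?_
    simp only [id]
    field_simp
    ring
  · intro τ hτ
    have p1 : 0 < τ := ht.trans_lt hτ.1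
    have p3 : 0 < t₂ - τ := by linarith [hτ.2]
    have p4 : 0 < t₂ - t₁ := by linarith
    positivity

lemma kerI {α x τ : ℝ} (h0 : 0 < α) (hx : 0 < x) (h : x < τ) :
    ∫⁻ p in Ioo 0 x, ENNReal.ofReal ((τ - p) ^ (-α - 1) * p ^ (α - 1))
      = ENNReal.ofReal (α⁻¹ * τ⁻¹ * x ^ α * (τ - x) ^ (-α)) := by
  have hτ := hx.trans h
  have key := ftc_l (a := 0) (b := x)
    (F := fun p => α⁻¹ * τ⁻¹ * (p ^ α * (τ - p) ^ (-α)))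
    (f := fun p => (τ - p) ^ (-α - 1) * p ^ (α - 1)) hx.le ?_ ?_ ?_
  · rw [key]
    congr 1
    simp [Real.zero_rpow h0.ne']
    ring
  · have c1 : ContinuousOn (fun τ : ℝ => τ ^ α) (Icc 0 x) :=
      (Real.continuous_rpow_const h0.le).continuousOn
    have c2 : ContinuousOn (fun p : ℝ => (τ - p) ^ (-α)) (Icc 0 x) := by
      apply ContinuousOn.rpow_const (by fun_prop)
      intro p hp
      left
      linarith [hp.2]
    fun_prop
  · intro p hp
    have p1 : 0 < p := hp.1
    have p3 : 0 < τ - p := by linarith [hp.2]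
    have d1 := ((hasDerivAt_id p).rpow_const (p := α) (Or.inl p1.ne'))
    have d2 := (((hasDerivAt_id p).const_sub τ).rpow_const (p := -α) (Or.inl p3.ne'))
    refine ((d1.mul d2).const_mul (α⁻¹ * τ⁻¹)).congr_deriv ?_
    have e1 : p ^ α = p ^ (α - 1) * p := by
      rw [← Real.rpow_add_one p1.ne']; congr 1; ring
    have e2 : (τ - p) ^ (-α) = (τ - p) ^ (-α - 1) * (τ - p) := by
      rw [← Real.rpow_add_one p3.ne']; congr 1; ring
    simp only [id]
    rw [e1, e2]
    field_simp
    ring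
  · intro p hp
    have p1 : 0 < p := hp.1
    have p3 : 0 < τ - p := by linarith [hp.2]
    positivity

lemma enorm_int_le {a b : ℝ} (h : a ≤ b) (f : ℝ → ℝ) :
    ‖∫ x in a..b, f x‖ₑ ≤ ∫⁻ x in Ioo a b, ‖f x‖ₑ := by
  rw [intervalIntegral.integral_of_le h, integral_Ioc_eq_integral_Ioo]
  exact enorm_integral_le_lintegral_enorm _

lemma innerJ {α T τ : ℝ} (h0 : 0 < α) (hτ : 0 < τ) (hT : τ ≤ T) {s : ℝ → ℝ} {φ : ℝ → ENNReal}
    (hφ : Measurable φ)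
    (hm : ∀ p q, 0 ≤ p → p ≤ q → q ≤ T → s p ≤ s q)
    (hs : ∀ p q, 0 ≤ p → p ≤ q → q ≤ T → ENNReal.ofReal (s q - s p) = ∫⁻ x in Ioo p q, φ x) :
    ‖∫ p in (0:ℝ)..τ, (τ - p) ^ (-α - 1) * (s τ - s p) * p ^ (α - 1)‖ₑ ≤
      ∫⁻ x in Ioo 0 τ, φ x * ENNReal.ofReal (α⁻¹ * τ⁻¹ * x ^ α * (τ - x) ^ (-α)) := by
  refine (enorm_int_le hτ.le _).trans ?_
  have e1 : ∫⁻ p in Ioo 0 τ, ‖(τ - p) ^ (-α - 1) * (s τ - s p) * p ^ (α - 1)‖ₑ =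
      ∫⁻ p in Ioo 0 τ, ∫⁻ x in Ioo p τ, ENNReal.ofReal ((τ - p) ^ (-α - 1) * p ^ (α - 1)) * φ x := by
    refine setLIntegral_congr_fun measurableSet_Ioo fun p hp => ?_
    have p1 : 0 < p := hp.1
    have p3 : 0 < τ - p := by linarith [hp.2]
    have p4 : 0 ≤ s τ - s p := by linarith [hm p τ p1.le hp.2.le hT]
    rw [lintegral_const_mul _ hφ, ← hs p τ p1.le hp.2.le hT, ← ENNReal.ofReal_mul (by positivity),
      Real.enorm_of_nonneg (by positivity)]
    congr 1; ring
  rw [e1, tri (by unfold Function.uncurry; fun_prop)]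
  apply le_of_eq
  refine setLIntegral_congr_fun measurableSet_Ioo fun x hx => ?_
  rw [lintegral_mul_const _ (by fun_prop), kerI h0 hx.1 hx.2, mul_comm]

lemma partii {α T t : ℝ} (h0 : 0 < α) (h1 : α < 1) (ht : 0 < t) (hT : t ≤ T) {s : ℝ → ℝ}
    {φ : ℝ → ENNReal} (hφ : Measurable φ)
    (hm : ∀ p q, 0 ≤ p → p ≤ q → q ≤ T → s p ≤ s q)
    (hs : ∀ p q, 0 ≤ p → p ≤ q → q ≤ T → ENNReal.ofReal (s q - s p) = ∫⁻ x in Ioo p q, φ x) :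
    |Q11 α s 0 t| ≤ 2 / α * (1 / α + 1 / (1 - α)) * (s t - s 0) := by
  have hC : 0 < 1 / α + 1 / (1 - α) := by
    have : 0 < 1 - α := by linarith
    positivity
  have hst : 0 ≤ s t - s 0 := by linarith [hm 0 t le_rfl ht.le hT]
  suffices ‖Q11 α s 0 t‖ₑ ≤ ENNReal.ofReal (α⁻¹ * (1 / α + 1 / (1 - α)) * (s t - s 0)) by
    rw [Real.enorm_eq_ofReal_abs, ENNReal.ofReal_le_ofReal_iff (by positivity)] at this
    refine this.trans ?_
    gcongr
    rw [inv_eq_one_div]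
    gcongr
    norm_num
  unfold Q11
  rw [enorm_mul]
  calc _ ≤ ‖t ^ (1 - α)‖ₑ * ∫⁻ τ in Ioo 0 t, ∫⁻ x in Ioo 0 τ, φ x *
          ENNReal.ofReal ((t - τ) ^ (α - 1) * (α⁻¹ * τ⁻¹ * x ^ α * (τ - x) ^ (-α))) := by
        gcongr
        refine (enorm_int_le ht.le _).trans (setLIntegral_mono' measurableSet_Ioo fun τ hτ => ?_)
        have p3 : 0 < t - τ := by linarith [hτ.2]
        rw [enorm_mul]
        refine (mul_le_mul_right (innerJ h0 hτ.1 (hτ.2.le.trans hT) hφ hm hs) _).trans ?_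
        rw [← lintegral_const_mul _ (by fun_prop), Real.enorm_of_nonneg (by positivity)]
        refine lintegral_mono fun x => le_of_eq ?_
        rw [mul_left_comm, ← ENNReal.ofReal_mul (by positivity)]
    _ = ‖t ^ (1 - α)‖ₑ * ∫⁻ x in Ioo 0 t, ∫⁻ τ in Ioo x t, φ x *
          ENNReal.ofReal ((t - τ) ^ (α - 1) * (α⁻¹ * τ⁻¹ * x ^ α * (τ - x) ^ (-α))) := by
        rw [tri (by unfold Function.uncurry; fun_prop)]
    _ ≤ ∫⁻ x in Ioo 0 t, φ x * ENNReal.ofReal (α⁻¹ * (1 / α + 1 / (1 - α))) := by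
        rw [← lintegral_const_mul' _ _ (by simp)]
        refine setLIntegral_mono' measurableSet_Ioo fun x hx => ?_
        rw [lintegral_const_mul _ (by fun_prop), mul_left_comm]
        gcongr
        rw [← lintegral_const_mul' _ _ (by simp)]
        have b := beta1 h0 h1 hx.1 hx.2
        rw [ENNReal.ofReal_mul (by positivity)]
        refine le_trans (le_of_eq ?_) (mul_le_mul_right b _)
        rw [← lintegral_const_mul' _ _ (by simp)]
        refine lintegral_congr fun τ => ?_
        rw [Real.enorm_of_nonneg (by positivity), ← ENNReal.ofReal_mul (by positivity),
          ← ENNReal.ofReal_mul (by positivity)]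
        congr 1; ring
    _ = _ := by
        rw [lintegral_mul_const _ hφ, ← hs 0 t le_rfl ht.le hT, ← ENNReal.ofReal_mul hst]
        congr 1; ring

lemma outer {α t₁ t₂ K : ℝ} (h0 : 0 < α) (h1 : α < 1) (ht : 0 ≤ t₁) (h : t₁ < t₂) (hK : 0 ≤ K)
    {G : ℝ → ℝ} (hG : ∀ τ ∈ Ioo t₁ t₂, ‖G τ‖ₑ ≤
      ENNReal.ofReal (K * ((t₂ - τ) ^ (α - 1) * τ ^ (α - 1)))) :
    |t₂ ^ (1 - α) * ∫ τ in t₁..t₂, G τ| ≤ 2 / α * K * (t₂ - t₁) ^ α := by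
  have p2 : 0 < t₂ := by linarith
  have p4 : 0 < t₂ - t₁ := by linarith
  rw [← ENNReal.ofReal_le_ofReal_iff (by positivity), ← Real.enorm_eq_ofReal_abs, enorm_mul]
  calc _ ≤ ‖t₂ ^ (1 - α)‖ₑ * ∫⁻ τ in Ioo t₁ t₂,
            ENNReal.ofReal (K * ((t₂ - τ) ^ (α - 1) * τ ^ (α - 1))) := by
        gcongr
        exact (enorm_int_le h.le _).trans (setLIntegral_mono' measurableSet_Ioo hG)
    _ = ENNReal.ofReal K * ∫⁻ τ in Ioo t₁ t₂,
          ENNReal.ofReal (t₂ ^ (1 - α) * ((t₂ - τ) ^ (α - 1) * τ ^ (α - 1))) := by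
        rw [← lintegral_const_mul' _ _ (by simp), ← lintegral_const_mul' _ _ (by simp)]
        refine lintegral_congr fun τ => ?_
        rw [Real.enorm_of_nonneg (by positivity), ← ENNReal.ofReal_mul (by positivity),
          ← ENNReal.ofReal_mul (by positivity)]
        congr 1; ring
    _ ≤ _ := by
        refine (mul_le_mul_right (kerD h0 h1 ht h) _).trans (le_of_eq ?_)
        rw [← ENNReal.ofReal_mul hK]
        congr 1; ring

lemma partiii {α t₁ t₂ : ℝ} (h0 : 0 < α) (h1 : α < 1) (ht : 0 ≤ t₁) (h : t₁ < t₂) :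
    |Q12 α t₁ t₂| ≤ 2 / α * (1 / α + 1 / (1 - α)) * (t₂ - t₁) ^ α := by
  have hC : 0 < 1 / α + 1 / (1 - α) := by
    have : 0 < 1 - α := by linarith
    positivity
  refine outer h0 h1 ht h hC.le fun τ hτ => ?_
  have p1 : 0 < τ := ht.trans_lt hτ.1
  have p3 : 0 < t₂ - τ := by linarith [hτ.2]
  rw [enorm_mul, mul_comm (1 / α + 1 / (1 - α)), ENNReal.ofReal_mul (by positivity),
    Real.enorm_of_nonneg (by positivity)]
  gcongr
  refine (enorm_int_le p1.le _).trans (le_trans (le_of_eq ?_) (beta2 h0 h1 p1))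
  refine setLIntegral_congr_fun measurableSet_Ioo fun p hp => ?_
  have q1 : 0 < p := hp.1
  have q3 : 0 < τ - p := by linarith [hp.2]
  exact Real.enorm_of_nonneg (by positivity)

lemma parti {α T M t₁ t₂ : ℝ} (h0 : 0 < α) (h1 : α < 1) (ht : 0 ≤ t₁) (h : t₁ < t₂) (hT : t₂ ≤ T)
    (hM : 0 ≤ M) {s : ℝ → ℝ}
    {φ : ℝ → ENNReal} (hφ : Measurable φ)
    (hm : ∀ p q, 0 ≤ p → p ≤ q → q ≤ T → s p ≤ s q)
    (hs : ∀ p q, 0 ≤ p → p ≤ q → q ≤ T → ENNReal.ofReal (s q - s p) = ∫⁻ x in Ioo p q, φ x)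
    (hb : ∀ x ∈ Ioc 0 T, φ x ≤ ENNReal.ofReal (M * x ^ (α - 1))) :
    |Q11 α s t₁ t₂| ≤ 2 / α * (M * α⁻¹ * (1 / α + 1 / (1 - α))) * (t₂ - t₁) ^ α := by
  have hC : 0 < 1 / α + 1 / (1 - α) := by
    have : 0 < 1 - α := by linarith
    positivity
  refine outer h0 h1 ht h (by positivity) fun τ hτ => ?_
  have p1 : 0 < τ := ht.trans_lt hτ.1
  have p3 : 0 < t₂ - τ := by linarith [hτ.2]
  rw [enorm_mul, mul_left_comm, ENNReal.ofReal_mul (by positivity),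
    Real.enorm_of_nonneg (by positivity)]
  gcongr
  refine (innerJ h0 p1 (hτ.2.le.trans hT) hφ hm hs).trans ?_
  calc _ ≤ ∫⁻ x in Ioo 0 τ, ENNReal.ofReal (M * α⁻¹ * τ ^ (α - 1)) *
        ENNReal.ofReal ((τ - x) ^ (-α) * x ^ (α - 1)) := by
        refine setLIntegral_mono' measurableSet_Ioo fun x hx => ?_
        have q1 : 0 < x := hx.1
        have q3 : 0 < τ - x := by linarith [hx.2]
        refine (mul_le_mul_left (hb x ⟨q1, hx.2.le.trans (hτ.2.le.trans hT)⟩) _).trans ?_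
        rw [← ENNReal.ofReal_mul (by positivity), ← ENNReal.ofReal_mul (by positivity)]
        apply ENNReal.ofReal_le_ofReal
        rw [Real.rpow_sub_one p1.ne']
        have : x ^ α ≤ τ ^ α := Real.rpow_le_rpow q1.le hx.2.le h0.le
        calc _ = M * α⁻¹ * τ⁻¹ * x ^ (α - 1) * (τ - x) ^ (-α) * x ^ α := by ring
          _ ≤ M * α⁻¹ * τ⁻¹ * x ^ (α - 1) * (τ - x) ^ (-α) * τ ^ α := by gcongr
          _ = _ := by ring
    _ ≤ _ := by
        rw [lintegral_const_mul' _ _ (by simp)]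
        refine (mul_le_mul_right (beta2 h0 h1 p1) _).trans (le_of_eq ?_)
        rw [← ENNReal.ofReal_mul (by positivity)]
        congr 1; ring

/-- There is a constant `c₀ = c₀(α)` such that for any admissible `s`:
(i) `Q_{1,1}(t₁,t₂) → 0` as `t₂ → t₁⁺` for every `t₁ ≥ 0`;
(ii) `|Q_{1,1}(0,t)| ≤ c₀ [s(t) − s(0)]`;
(iii) `|Q_{1,2}(t₁,t₂)| ≤ c₀ |t₂ − t₁|^α`. -/
theorem stmt_10 (α : ℝ) (hα : α ∈ Set.Ioo (0:ℝ) 1) :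
    ∃ c₀ > (0:ℝ), ∀ T b : ℝ, 0 < T → 0 < b → ∀ s s' : ℝ → ℝ,
      IntegrableOn s' (Set.Icc 0 T) →
      (∀ t ∈ Set.Icc (0:ℝ) T, s t = b + ∫ τ in (0:ℝ)..t, s' τ) →
      (∀ t ∈ Set.Icc (0:ℝ) T, 0 ≤ s' t) →
      ContinuousOn (fun t : ℝ => t ^ (1 - α) * s' t) (Set.Icc 0 T) →
      (∀ t₁ ∈ Set.Ico (0:ℝ) T,
          Filter.Tendsto (fun t₂ => Q11 α s t₁ t₂)
            (nhdsWithin t₁ (Set.Ioc t₁ T)) (nhds 0)) ∧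
        (∀ t ∈ Set.Ioc (0:ℝ) T, |Q11 α s 0 t| ≤ c₀ * (s t - s 0)) ∧
        (∀ t₁ t₂ : ℝ, 0 ≤ t₁ → t₁ < t₂ → t₂ ≤ T →
          |Q12 α t₁ t₂| ≤ c₀ * |t₂ - t₁| ^ α) := by
  obtain ⟨h0, h1⟩ := hα
  have h1' : 0 < 1 - α := by linarith
  refine ⟨2 / α * (1 / α + 1 / (1 - α)), by positivity, ?_⟩
  intro T b hT hb s s' hi hs hn hc
  have hii : ∀ p q, 0 ≤ p → p ≤ q → q ≤ T → IntervalIntegrable s' volume p q := by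
    intro p q hp hpq hq
    rw [intervalIntegrable_iff_integrableOn_Ioc_of_le hpq]
    exact hi.mono_set (Ioc_subset_Icc_self.trans (Icc_subset_Icc hp hq))
  have hdiff : ∀ p q, 0 ≤ p → p ≤ q → q ≤ T → s q - s p = ∫ x in p..q, s' x := by
    intro p q hp hpq hq
    rw [hs q ⟨hp.trans hpq, hq⟩, hs p ⟨hp, hpq.trans hq⟩,
      ← intervalIntegral.integral_add_adjacent_intervals (hii 0 p le_rfl hp (hpq.trans hq))
        (hii p q hp hpq hq)]
    ring
  have hm : ∀ p q, 0 ≤ p → p ≤ q → q ≤ T → s p ≤ s q := by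
    intro p q hp hpq hq
    rw [← sub_nonneg, hdiff p q hp hpq hq]
    exact intervalIntegral.integral_nonneg hpq fun x hx => hn x ⟨hp.trans hx.1, hx.2.trans hq⟩
  have hcs : ContinuousOn s' (Ioc 0 T) := by
    have : ContinuousOn (fun t : ℝ => t ^ (α - 1) * (t ^ (1 - α) * s' t)) (Ioc 0 T) := by
      refine ContinuousOn.mul ?_ (hc.mono Ioc_subset_Icc_self)
      exact continuousOn_id.rpow_const fun x hx => Or.inl hx.1.ne'
    refine this.congr fun x hx => ?_
    beta_reduce
    rw [← mul_assoc, ← Real.rpow_add hx.1]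
    simp
  have hmeas : Measurable ((Ioc 0 T).indicator s') := by
    classical
    rw [← Set.piecewise_eq_indicator]
    exact hcs.measurable_piecewise continuousOn_const measurableSet_Ioc
  set φ : ℝ → ENNReal := fun x => ENNReal.ofReal ((Ioc 0 T).indicator s' x) with hφd
  have hφ : Measurable φ := hmeas.ennreal_ofReal
  have hsφ : ∀ p q, 0 ≤ p → p ≤ q → q ≤ T →
      ENNReal.ofReal (s q - s p) = ∫⁻ x in Ioo p q, φ x := by
    intro p q hp hpq hq
    rw [hdiff p q hp hpq hq, intervalIntegral.integral_of_le hpq, integral_Ioc_eq_integral_Ioo,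
      ofReal_integral_eq_lintegral_ofReal]
    · refine setLIntegral_congr_fun measurableSet_Ioo fun x hx => ?_
      simp only [hφd]
      rw [indicator_of_mem]
      exact ⟨hp.trans_lt hx.1, hx.2.le.trans hq⟩
    · exact ((intervalIntegrable_iff_integrableOn_Ioo_of_le hpq).1 (hii p q hp hpq hq))
    · exact (ae_restrict_iff' measurableSet_Ioo).2 (ae_of_all _ fun x hx =>
        hn x ⟨hp.trans hx.1.le, hx.2.le.trans hq⟩)
  obtain ⟨M, hM⟩ := isCompact_Icc.exists_bound_of_continuousOn hc
  have hM0 : 0 ≤ M := (norm_nonneg _).trans (hM 0 ⟨le_rfl, hT.le⟩)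
  have hbφ : ∀ x ∈ Ioc 0 T, φ x ≤ ENNReal.ofReal (M * x ^ (α - 1)) := by
    intro x hx
    simp only [hφd]
    rw [indicator_of_mem hx]
    apply ENNReal.ofReal_le_ofReal
    have h3 := (le_abs_self _).trans (hM x ⟨hx.1.le, hx.2⟩)
    have hx0 := hx.1
    calc s' x = x ^ (1 - α) * s' x * x ^ (α - 1) := by
          rw [mul_right_comm, ← Real.rpow_add hx0]; simp
      _ ≤ _ := by gcongr
  refine ⟨?_, ?_, ?_⟩
  · intro t₁ ht
    have hlim : Tendsto (fun t₂ => 2 / α * (M * α⁻¹ * (1 / α + 1 / (1 - α))) * (t₂ - t₁) ^ α)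
        (𝓝[Ioc t₁ T] t₁) (𝓝 0) := by
      have hcont : Continuous
          (fun t₂ : ℝ => 2 / α * (M * α⁻¹ * (1 / α + 1 / (1 - α))) * (t₂ - t₁) ^ α) :=
        continuous_const.mul ((Real.continuous_rpow_const h0.le).comp
          (continuous_id.sub continuous_const))
      have := (hcont.tendsto t₁).mono_left (nhdsWithin_le_nhds (s := Ioc t₁ T))
      simpa [Real.zero_rpow h0.ne'] using this
    refine squeeze_zero_norm' ?_ hlim
    filter_upwards [self_mem_nhdsWithin] with t₂ h2
    exact parti h0 h1 ht.1 h2.1 h2.2 hM0 hφ hm hsφ hbφ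
  · intro t ht
    exact partii h0 h1 ht.1 ht.2 hφ hm hsφ
  · intro t₁ t₂ h2 h3 _
    rw [abs_of_pos (sub_pos.2 h3)]
    exact partiii h0 h1 h2 h3
end
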